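/- arXiv:2007.02490 — 4 statements merged into one kernel-verified Lean document; each statement's English description precedes it below -/
import Mathlib

section
/- The 8×8 complex matrix U₆ = (1/2)·S₀⊗(I₂⊗I₂ + σ₁⊗σ₁ + σ₂⊗σ₂ + σ₃⊗σ₃) + (1/√2)·S₃⊗(I₂⊗σ₁ + σ₂⊗σ₃) is unitary and has Schmidt rank exactly 6. -/
/-!
The matrix is `S0 ⊗ P + S3 ⊗ Q` with unitary `4 × 4` blocks `P` (the swap) and `Q`, so it is
unitary. The defining formula is a sum of six product terms, so the Schmidt rank is at most `6`.

For the lower bound, contract the third tensor factor with a `2 × 2` matrix `v`. The block `P`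
then becomes the linear map `X v = vᵀ`, and `Q` becomes a map `Y` of rank `2` with
`X (ker Y) ⊆ range Y`. A decomposition of length `r` writes `X` and `Y` simultaneously as
combinations of the same `r` rank-one maps `v ↦ γ j v • β j`. Choose
`dim ker Y` of the functionals `γ j` whose common kernel `W` is a complement of `ker Y`
(possible because the `γ j` separate points, `X` being injective). On `W` only the remaining
terms survive, so `X W + Y W` lies in the span of `r - dim ker Y` vectors `β j`. On the other hand
`Y W = range Y ⊇ X (ker Y)`, so `X W + Y W ⊇ X (W + ker Y)` is the whole space. Hence
`r ≥ dim V + dim ker Y = 4 + 2`.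
-/

open Matrix Kronecker Complex

/-- The tripartite Schmidt rank of an 8×8 complex matrix, viewed as a matrix on
ℂ² ⊗ ℂ² ⊗ ℂ² via Kronecker products: the least `r` such that
`U = ∑ j, A j ⊗ₖ (B j ⊗ₖ C j)` with 2×2 matrices `A j`, `B j`, `C j`. -/
noncomputable def sr (U : Matrix (Fin 2 × Fin 2 × Fin 2) (Fin 2 × Fin 2 × Fin 2) ℂ) : ℕ :=
  sInf {r | ∃ A B C : Fin r → Matrix (Fin 2) (Fin 2) ℂ,
    U = ∑ j, A j ⊗ₖ (B j ⊗ₖ C j)}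

def S0 : Matrix (Fin 2) (Fin 2) ℂ := !![1, 0; 0, 0]
def S1 : Matrix (Fin 2) (Fin 2) ℂ := !![0, 1; 0, 0]
def S2 : Matrix (Fin 2) (Fin 2) ℂ := !![0, 0; 1, 0]
def S3 : Matrix (Fin 2) (Fin 2) ℂ := !![0, 0; 0, 1]
def σ1 : Matrix (Fin 2) (Fin 2) ℂ := !![0, 1; 1, 0]
def σ2 : Matrix (Fin 2) (Fin 2) ℂ := !![0, -I; I, 0]
def σ3 : Matrix (Fin 2) (Fin 2) ℂ := !![1, 0; 0, -1]
def I2 : Matrix (Fin 2) (Fin 2) ℂ := 1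

noncomputable def U₆ : Matrix (Fin 2 × Fin 2 × Fin 2) (Fin 2 × Fin 2 × Fin 2) ℂ :=
  (1 / 2 : ℂ) • (S0 ⊗ₖ (I2 ⊗ₖ I2 + σ1 ⊗ₖ σ1 + σ2 ⊗ₖ σ2 + σ3 ⊗ₖ σ3)) +
    (Real.sqrt 2 : ℂ)⁻¹ • (S3 ⊗ₖ (I2 ⊗ₖ σ1 + σ2 ⊗ₖ σ3))

/-- If `dim K ≤ n`, a finite family of functionals separating the points of `K` has a subfamily of
at most `n` members that still separates them: each functional that does not vanish on what is
left of `K` lowers the dimension. -/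
lemma exists_separating_subset {V : Type*} [AddCommGroup V] [Module ℂ V] [FiniteDimensional ℂ V]
    {r : ℕ} (γ : Fin r → V →ₗ[ℂ] ℂ) (n : ℕ) (K : Submodule ℂ V)
    (hn : Module.finrank ℂ K ≤ n) (hK : ∀ v ∈ K, (∀ j, γ j v = 0) → v = 0) :
    ∃ S : Finset (Fin r), S.card ≤ n ∧ ∀ v ∈ K, (∀ j ∈ S, γ j v = 0) → v = 0 := by
  induction n generalizing K with
  | zero =>
    refine ⟨∅, le_rfl, fun v hv _ => ?_⟩
    have : K = ⊥ := Submodule.finrank_eq_zero.mp (by omega)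
    simpa [this] using hv
  | succ n ih =>
    by_cases h : ∃ v ∈ K, ∃ j, γ j v ≠ 0
    · obtain ⟨v, hv, j, hj⟩ := h
      have hlt : K ⊓ LinearMap.ker (γ j) < K :=
        lt_of_le_of_ne inf_le_left fun e => hj (by
          have : v ∈ K ⊓ LinearMap.ker (γ j) := by rw [e]; exact hv
          exact this.2)
      have := Submodule.finrank_lt_finrank_of_lt hlt
      obtain ⟨S, hS, hsep⟩ := ih (K ⊓ LinearMap.ker (γ j)) (by omega)
        fun w hw => hK w hw.1
      refine ⟨insert j S, (Finset.card_insert_le _ _).trans (by omega), fun w hw h0 => ?_⟩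
      exact hsep w ⟨hw, h0 j (Finset.mem_insert_self _ _)⟩
        fun i hi => h0 i (Finset.mem_insert_of_mem hi)
    · push Not at h
      exact ⟨∅, by simp, fun v hv _ => hK v hv (h v hv)⟩

/-- Substitution bound for the tensor rank of a pencil: if `X` is injective, `X (ker Y) ⊆ range Y`
and both maps are combinations of the same `r` rank-one maps `v ↦ γ j v • β j`, then
`r ≥ dim V + dim ker Y`. -/
lemma pencil_rank_bound {V : Type*} [AddCommGroup V] [Module ℂ V] [FiniteDimensional ℂ V]
    {r : ℕ} (γ : Fin r → V →ₗ[ℂ] ℂ) (β : Fin r → V) (a b : Fin r → ℂ) (X Y : V →ₗ[ℂ] V)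
    (hX : ∀ v, X v = ∑ j, (a j * γ j v) • β j) (hY : ∀ v, Y v = ∑ j, (b j * γ j v) • β j)
    (hinj : Function.Injective X) (hXY : ∀ v, Y v = 0 → ∃ w, Y w = X v) :
    Module.finrank ℂ V + Module.finrank ℂ (LinearMap.ker Y) ≤ r := by
  classical
  obtain ⟨S, hS, hsep⟩ := exists_separating_subset γ _ (LinearMap.ker Y) le_rfl
    fun v _ hv => hinj (by rw [hX, map_zero]; simp [hv])
  set W : Submodule ℂ V := LinearMap.ker (LinearMap.pi fun j : S => γ j) with hW
  have memW : ∀ v, v ∈ W ↔ ∀ j ∈ S, γ j v = 0 := fun v => by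
    simp [hW, funext_iff]
  have hinf : W ⊓ LinearMap.ker Y = ⊥ := by
    rw [eq_bot_iff]
    intro v hv
    exact hsep v hv.2 ((memW v).1 hv.1)
  have hWdim : Module.finrank ℂ V ≤ Module.finrank ℂ W + S.card := by
    have h1 := LinearMap.finrank_range_add_finrank_ker (LinearMap.pi fun j : S => γ j)
    have h2 := Submodule.finrank_le (LinearMap.range (LinearMap.pi fun j : S => γ j))
    rw [Module.finrank_fintype_fun_eq_card, Fintype.card_coe] at h2
    rw [← hW] at h1
    omega
  have hsum := Submodule.finrank_sup_add_finrank_inf_eq W (LinearMap.ker Y)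
  rw [hinf, finrank_bot] at hsum
  have hle := Submodule.finrank_le (W ⊔ LinearMap.ker Y)
  have htop : W ⊔ LinearMap.ker Y = ⊤ := Submodule.eq_top_of_finrank_eq (by omega)
  have hdec : ∀ v, ∃ w ∈ W, ∃ k, Y k = 0 ∧ w + k = v := fun v => by
    have hv : v ∈ W ⊔ LinearMap.ker Y := htop ▸ Submodule.mem_top
    obtain ⟨w, hw, k, hk, e⟩ := Submodule.mem_sup.1 hv
    exact ⟨w, hw, k, hk, e⟩
  set T : Submodule ℂ V := Submodule.span ℂ (↑(Sᶜ.image β) : Set V) with hT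
  have hβ : ∀ (c : Fin r → ℂ), ∀ w ∈ W, ∑ j, (c j * γ j w) • β j ∈ T := fun c w hw => by
    refine Submodule.sum_mem _ fun j _ => ?_
    by_cases hj : j ∈ S
    · simp [(memW w).1 hw j hj]
    · refine Submodule.smul_mem _ _ (Submodule.subset_span ?_)
      exact Finset.mem_coe.2 (Finset.mem_image_of_mem β (Finset.mem_compl.2 hj))
  have hYT : ∀ v, Y v ∈ T := fun v => by
    obtain ⟨w, hw, k, hk, rfl⟩ := hdec v
    rw [map_add, hk, add_zero, hY]
    exact hβ b w hw
  have hXT : ∀ v, X v ∈ T := fun v => by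
    obtain ⟨w, hw, k, hk, rfl⟩ := hdec v
    obtain ⟨u, hu⟩ := hXY k hk
    rw [map_add, ← hu]
    exact T.add_mem (by rw [hX]; exact hβ a w hw) (hYT u)
  have hTtop : T = ⊤ := by
    rw [eq_top_iff]
    intro v _
    obtain ⟨u, rfl⟩ := (LinearMap.injective_iff_surjective.1 hinj) v
    exact hXT u
  have hTdim : Module.finrank ℂ T ≤ r - S.card :=
    (finrank_span_finset_le_card _).trans (Finset.card_image_le.trans (by
      rw [Finset.card_compl, Fintype.card_fin]))
  rw [hTtop, finrank_top] at hTdim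
  have hSr : S.card ≤ r := by simpa using S.card_le_univ
  omega

/-- Contraction of the diagonal block `(i, i)` of `U` in the third tensor factor. -/
noncomputable def contract (U : Matrix (Fin 2 × Fin 2 × Fin 2) (Fin 2 × Fin 2 × Fin 2) ℂ)
    (i : Fin 2) : Matrix (Fin 2) (Fin 2) ℂ →ₗ[ℂ] Matrix (Fin 2) (Fin 2) ℂ where
  toFun v := Matrix.of fun p q => ∑ k, ∑ l, U (i, p, k) (i, q, l) * v k l
  map_add' v w := by
    ext p q
    simp [mul_add, Finset.sum_add_distrib]
  map_smul' c v := by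
    ext p q
    simp only [Fin.sum_univ_two, of_apply, Matrix.smul_apply, smul_eq_mul, RingHom.id_apply]
    ring

/-- The bilinear pairing with a fixed matrix `C`, without complex conjugation. -/
noncomputable def pairing (C : Matrix (Fin 2) (Fin 2) ℂ) :
    Matrix (Fin 2) (Fin 2) ℂ →ₗ[ℂ] ℂ where
  toFun v := ∑ k, ∑ l, C k l * v k l
  map_add' v w := by simp [mul_add, Finset.sum_add_distrib]
  map_smul' c v := by
    simp only [Fin.sum_univ_two, Matrix.smul_apply, smul_eq_mul, RingHom.id_apply]
    ring

lemma contract_sum {r : ℕ} (A B C : Fin r → Matrix (Fin 2) (Fin 2) ℂ) (i : Fin 2)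
    (v : Matrix (Fin 2) (Fin 2) ℂ) :
    contract (∑ j, A j ⊗ₖ (B j ⊗ₖ C j)) i v =
      ∑ j, (A j i i * pairing (C j) v) • B j := by
  ext p q
  simp only [contract, pairing, LinearMap.coe_mk, AddHom.coe_mk, Fin.sum_univ_two, of_apply,
    Matrix.sum_apply, Matrix.smul_apply, smul_eq_mul, kroneckerMap_apply, Finset.sum_mul,
    ← Finset.sum_add_distrib]
  exact Finset.sum_congr rfl fun j _ => by ring

lemma contract_zero (v : Matrix (Fin 2) (Fin 2) ℂ) : contract U₆ 0 v = vᵀ := by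
  ext p q
  fin_cases p <;> fin_cases q <;>
    simp [contract, U₆, S0, S3, I2, σ1, σ2, σ3, Fin.sum_univ_two] <;> ring

lemma contract_one (v : Matrix (Fin 2) (Fin 2) ℂ) :
    contract U₆ 1 v =
      (Real.sqrt 2 : ℂ)⁻¹ • ((v 0 1 + v 1 0) • (1 : Matrix (Fin 2) (Fin 2) ℂ) +
        (v 0 0 - v 1 1) • σ2) := by
  ext p q
  fin_cases p <;> fin_cases q <;>
    simp [contract, U₆, S0, S3, I2, σ1, σ2, σ3, Fin.sum_univ_two] <;> ring

lemma sqrt_two_ne : (Real.sqrt 2 : ℂ) ≠ 0 := by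
  simp

lemma contract_one_eq_zero (v : Matrix (Fin 2) (Fin 2) ℂ) (h : contract U₆ 1 v = 0) :
    v 1 0 = - v 0 1 ∧ v 1 1 = v 0 0 := by
  rw [contract_one, smul_eq_zero] at h
  have h := h.resolve_left (inv_ne_zero sqrt_two_ne)
  have h0 := congrFun (congrFun h 0) 0
  have h1 := congrFun (congrFun h 1) 0
  simp [σ2] at h0 h1
  exact ⟨by linear_combination h0, by linear_combination -h1⟩

lemma finrank_ker_contract_one :
    2 ≤ Module.finrank ℂ (LinearMap.ker (contract U₆ 1)) := by
  have hli : LinearIndependent ℂ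
      ![(!![1, 0; 0, 1] : Matrix (Fin 2) (Fin 2) ℂ), !![0, 1; -1, 0]] := by
    rw [LinearIndependent.pair_iff]
    intro s t h
    have h0 := congrFun (congrFun h 0) 0
    have h1 := congrFun (congrFun h 0) 1
    simp at h0 h1
    exact ⟨h0, h1⟩
  have h2 := finrank_span_eq_card hli
  rw [Fintype.card_fin] at h2
  refine h2.ge.trans (Submodule.finrank_mono ?_)
  rw [Submodule.span_le]
  rintro _ ⟨j, rfl⟩
  fin_cases j <;> simp [contract_one]

lemma six_le {r : ℕ} (A B C : Fin r → Matrix (Fin 2) (Fin 2) ℂ)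
    (h : U₆ = ∑ j, A j ⊗ₖ (B j ⊗ₖ C j)) : 6 ≤ r := by
  have key := pencil_rank_bound (fun j => pairing (C j)) B (fun j => A j 0 0) (fun j => A j 1 1)
    (contract U₆ 0) (contract U₆ 1)
    (fun v => by rw [h]; exact contract_sum A B C 0 v)
    (fun v => by rw [h]; exact contract_sum A B C 1 v)
    (fun v w e => by rwa [contract_zero, contract_zero, transpose_inj] at e)
    (fun v hv => by
      obtain ⟨h1, h2⟩ := contract_one_eq_zero v hv
      -- `vᵀ = v 0 0 • 1 - (I * v 0 1) • σ2` is the image of the following matrix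
      refine ⟨(Real.sqrt 2 : ℂ) • !![-(I * v 0 1), v 0 0; 0, 0], ?_⟩
      rw [map_smul, contract_one, contract_zero, smul_smul, mul_inv_cancel₀ sqrt_two_ne, one_smul]
      ext p q
      fin_cases p <;> fin_cases q <;> simp [σ2, h1, h2, mul_right_comm])
  have h4 : Module.finrank ℂ (Matrix (Fin 2) (Fin 2) ℂ) = 4 := by
    simp [Module.finrank_matrix]
  have := finrank_ker_contract_one
  omega

lemma exists_six : ∃ A B C : Fin 6 → Matrix (Fin 2) (Fin 2) ℂ,
    U₆ = ∑ j, A j ⊗ₖ (B j ⊗ₖ C j) := by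
  refine ⟨![(1 / 2 : ℂ) • S0, (1 / 2 : ℂ) • S0, (1 / 2 : ℂ) • S0, (1 / 2 : ℂ) • S0,
    (Real.sqrt 2 : ℂ)⁻¹ • S3, (Real.sqrt 2 : ℂ)⁻¹ • S3],
    ![I2, σ1, σ2, σ3, I2, σ2], ![I2, σ1, σ2, σ3, σ1, σ3], ?_⟩
  simp [Fin.sum_univ_succ, U₆, kronecker_add, smul_kronecker, add_assoc]

lemma swap_block_unitary :
    ((1 / 2 : ℂ) • (I2 ⊗ₖ I2 + σ1 ⊗ₖ σ1 + σ2 ⊗ₖ σ2 + σ3 ⊗ₖ σ3)) *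
      ((1 / 2 : ℂ) • (I2 ⊗ₖ I2 + σ1 ⊗ₖ σ1 + σ2 ⊗ₖ σ2 + σ3 ⊗ₖ σ3))ᴴ = 1 := by
  ext ⟨p, q⟩ ⟨s, t⟩
  fin_cases p <;> fin_cases q <;> fin_cases s <;> fin_cases t <;>
    simp [Matrix.mul_apply, Fintype.sum_prod_type, I2, σ1, σ2, σ3, Fin.sum_univ_two,
      Matrix.one_apply] <;> norm_num

lemma second_block_unitary :
    ((Real.sqrt 2 : ℂ)⁻¹ • (I2 ⊗ₖ σ1 + σ2 ⊗ₖ σ3)) *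
      ((Real.sqrt 2 : ℂ)⁻¹ • (I2 ⊗ₖ σ1 + σ2 ⊗ₖ σ3))ᴴ = 1 := by
  have hs : (Real.sqrt 2 : ℂ)⁻¹ * (Real.sqrt 2 : ℂ)⁻¹ = 1 / 2 := by
    rw [← mul_inv, ← Complex.ofReal_mul, Real.mul_self_sqrt (by norm_num)]
    norm_num
  rw [conjTranspose_smul, smul_mul_smul_comm, star_inv₀, Complex.star_def, Complex.conj_ofReal, hs]
  ext ⟨p, q⟩ ⟨s, t⟩
  fin_cases p <;> fin_cases q <;> fin_cases s <;> fin_cases t <;>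
    simp [Matrix.mul_apply, Fintype.sum_prod_type, I2, σ1, σ2, σ3, Fin.sum_univ_two,
      Matrix.one_apply] <;> norm_num

lemma U₆_unitary : U₆ ∈ Matrix.unitaryGroup (Fin 2 × Fin 2 × Fin 2) ℂ := by
  have h00 : S0 * S0ᴴ = S0 := by ext p q; fin_cases p <;> fin_cases q <;> simp [Matrix.mul_apply, S0]
  have h03 : S0 * S3ᴴ = 0 := by ext p q; fin_cases p <;> fin_cases q <;> simp [Matrix.mul_apply, S0, S3]
  have h30 : S3 * S0ᴴ = 0 := by ext p q; fin_cases p <;> fin_cases q <;> simp [Matrix.mul_apply, S0, S3]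
  have h33 : S3 * S3ᴴ = S3 := by ext p q; fin_cases p <;> fin_cases q <;> simp [Matrix.mul_apply, S3]
  have h1 : S0 + S3 = 1 := by ext p q; fin_cases p <;> fin_cases q <;> simp [S0, S3]
  rw [Matrix.mem_unitaryGroup_iff, star_eq_conjTranspose, U₆, ← kronecker_smul, ← kronecker_smul,
    conjTranspose_add, conjTranspose_kronecker, conjTranspose_kronecker, add_mul, mul_add, mul_add,
    ← mul_kronecker_mul, ← mul_kronecker_mul, ← mul_kronecker_mul, ← mul_kronecker_mul,
    h00, h03, h30, h33, swap_block_unitary, second_block_unitary, zero_kronecker, zero_kronecker,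
    add_zero, zero_add, ← add_kronecker, h1, one_kronecker_one]

theorem stmt5 : U₆ ∈ Matrix.unitaryGroup (Fin 2 × Fin 2 × Fin 2) ℂ ∧ sr U₆ = 6 := by
  refine ⟨U₆_unitary, le_antisymm (Nat.sInf_le exists_six) (le_csInf ⟨6, exists_six⟩ ?_)⟩
  rintro r ⟨A, B, C, h⟩
  exact six_le A B C h
end

section
/- The 8×8 complex matrix U₇ = S₁⊗S₂⊗S₀ + S₂⊗S₃⊗S₀ + S₀⊗S₀⊗S₁ + S₃⊗S₁⊗S₁ + S₁⊗S₁⊗S₂ + S₂⊗S₀⊗S₂ + S₀⊗S₃⊗S₃ + S₃⊗S₂⊗S₃ is unitary and has Schmidt rank exactly 7. -/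
/-!
Up to a relabelling of the three coordinate systems, `U₇` is the tensor of 2×2 matrix
multiplication: a decomposition of `U₇` into `r` product operators is the same thing as a formula
`X * Y = ∑ᵢ fᵢ(X) gᵢ(Y) Wᵢ` with `r` terms, linear forms `fᵢ, gᵢ` and matrices `Wᵢ`. Strassen's
algorithm gives `r = 7`, and the content of the theorem is Winograd's bound `r ≥ 7`.

Suppose that there are six terms. Write `u ⊗ v` for the rank-one matrix `u vᵀ`.

* Any five of the `fᵢ` have trivial common kernel (`eq_zero_of_five`), since left multiplication by
  a nonzero matrix has rank at least two.
* For any three of the `gᵢ`, the vectors `v` such that they have a common zero `u ⊗ v ≠ 0` lie on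
  one line (`bad_subsingleton`). Hence for a generic `v`, any three of the `gᵢ` jointly separate
  the left ideal `L = {u ⊗ v}`.

Fix such a `v`, a vector `d ≠ 0` orthogonal to `v`, and `s ≠ 0` such that `sᵀ W₅ d = 0`. Let `R` be
the right ideal of matrices killed by `sᵀ`. Two forms `f_i, f_j` with `i, j ≠ 5` separate `R`. Of
the three indices other than `i, j, 5`, two, say `p, q`, are such that `g_p, g_q` separate `L`; let
`m` be the third. Choose `a ≠ 0` with `f_i(a) = f_j(a) = f_m(a) = 0`. Then `a ∉ R`, so
`Y ↦ sᵀ a Y d` is a nonzero form. It is a combination of `g_p` and `g_q`, and it vanishes on `L`;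
as `g_p, g_q` are independent on `L`, it is zero, a contradiction.
-/

open Matrix Kronecker Complex

noncomputable def U₇ : Matrix (Fin 2 × Fin 2 × Fin 2) (Fin 2 × Fin 2 × Fin 2) ℂ :=
  S1 ⊗ₖ (S2 ⊗ₖ S0) + S2 ⊗ₖ (S3 ⊗ₖ S0) + S0 ⊗ₖ (S0 ⊗ₖ S1) + S3 ⊗ₖ (S1 ⊗ₖ S1) +
    S1 ⊗ₖ (S1 ⊗ₖ S2) + S2 ⊗ₖ (S0 ⊗ₖ S2) + S0 ⊗ₖ (S3 ⊗ₖ S3) + S3 ⊗ₖ (S2 ⊗ₖ S3)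

/-! ### Linear forms and rank-one matrices -/

/-- Fewer linear forms than the dimension have a nontrivial common zero. -/
lemma exists_common_zero {V : Type*} [AddCommGroup V] [Module ℂ V] [FiniteDimensional ℂ V] {n : ℕ}
    (h : Fin n → V →ₗ[ℂ] ℂ) (hn : n < Module.finrank ℂ V) : ∃ x ≠ 0, ∀ i, h i x = 0 := by
  have hk : LinearMap.ker (LinearMap.pi h) ≠ ⊥ :=
    LinearMap.ker_ne_bot_of_finrank_lt (by simpa using hn)
  obtain ⟨x, hx, hx0⟩ := (Submodule.ne_bot_iff _).1 hk
  refine ⟨x, hx0, fun i => ?_⟩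
  simpa using congrFun (LinearMap.mem_ker.1 hx) i

/-- A family of linear forms separating the points of `ℂ²` contains two that already do. -/
lemma exists_pair {ι : Type*} (ψ : ι → (Fin 2 → ℂ) →ₗ[ℂ] ℂ)
    (h : ∀ t, (∀ i, ψ i t = 0) → t = 0) :
    ∃ i j, i ≠ j ∧ ∀ t, ψ i t = 0 → ψ j t = 0 → t = 0 := by
  have h1 : ∃ i, ψ i ≠ 0 := by
    by_contra! hc
    have := congrFun (h ![1, 0] (fun i => by simp [hc i])) 0
    simp at this
  obtain ⟨i, hi⟩ := h1
  obtain ⟨t₀, ht₀, h0⟩ := exists_common_zero (n := 1) (fun _ => ψ i) (by simp)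
  have h2 : ∃ j, ψ j t₀ ≠ 0 := by
    by_contra! hc
    exact ht₀ (h _ hc)
  obtain ⟨j, hj⟩ := h2
  refine ⟨i, j, ?_, ?_⟩
  · rintro rfl
    exact hj (h0 0)
  · intro t hit hjt
    by_contra ht
    have hli : LinearIndependent ℂ ![t₀, t] := by
      rw [LinearIndependent.pair_iff]
      intro a b hab
      have ha : a = 0 := by
        have := congrArg (ψ j) hab
        simpa [hjt, hj] using this
      subst ha
      simpa [ht] using hab
    let b := basisOfLinearIndependentOfCardEqFinrank hli (by simp)
    apply hi
    refine b.ext fun k => ?_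
    fin_cases k
    · simpa [b] using h0 0
    · simpa [b] using hit

/-- The linear map `t ↦ u ⊗ t`. -/
def rankOneRight (u : Fin 2 → ℂ) : (Fin 2 → ℂ) →ₗ[ℂ] Matrix (Fin 2) (Fin 2) ℂ :=
  vecMulVecBilin ℂ ℂ u

/-- The linear map `u ↦ u ⊗ t`. -/
def rankOneLeft (t : Fin 2 → ℂ) : (Fin 2 → ℂ) →ₗ[ℂ] Matrix (Fin 2) (Fin 2) ℂ :=
  (vecMulVecBilin ℂ ℂ).flip t

@[simp] lemma rankOneRight_apply (u t : Fin 2 → ℂ) : rankOneRight u t = vecMulVec u t := rfl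
@[simp] lemma rankOneLeft_apply (u t : Fin 2 → ℂ) : rankOneLeft t u = vecMulVec u t := rfl

lemma exists_dot_ne (u : Fin 2 → ℂ) (hu : u ≠ 0) : ∃ q, u ⬝ᵥ q ≠ 0 := by
  by_contra! h
  exact hu (dotProduct_eq_zero u h)

/-- Two vectors killed by the same nonzero 2×2 matrix are proportional. -/
lemma proportional_of_mulVec (a : Matrix (Fin 2) (Fin 2) ℂ) (ha : a ≠ 0) (u u' : Fin 2 → ℂ)
    (hu : u ≠ 0) (h : a *ᵥ u = 0) (h' : a *ᵥ u' = 0) : ∃ c : ℂ, u' = c • u := by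
  by_contra! hc
  have hli : LinearIndependent ℂ ![u, u'] := (LinearIndependent.pair_iff' hu).2
    fun c => (hc c).symm
  let b := basisOfLinearIndependentOfCardEqFinrank hli (by simp)
  apply ha
  apply Matrix.toLin'.injective
  refine b.ext fun k => ?_
  fin_cases k
  · simpa [b] using h
  · simpa [b] using h'

/-! ### The lower bound for 2×2 matrix multiplication -/

section Winograd

variable (f g : Fin 6 → Matrix (Fin 2) (Fin 2) ℂ →ₗ[ℂ] ℂ) (W : Fin 6 → Matrix (Fin 2) (Fin 2) ℂ)
  (H : ∀ X Y, X * Y = ∑ r, (f r X * g r Y) • W r)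

include H

lemma eq_zero_of_five (X : Matrix (Fin 2) (Fin 2) ℂ) (k : Fin 6)
    (hX : ∀ r, r ≠ k → f r X = 0) : X = 0 := by
  have h1 : ∀ Y, g k Y = 0 → X * Y = 0 := by
    intro Y hY
    rw [H]
    refine Finset.sum_eq_zero fun r _ => ?_
    by_cases hr : r = k
    · subst hr; simp [hY]
    · simp [hX r hr]
  by_contra hX0
  have h2 : ∃ i, X i ≠ 0 := by
    by_contra! hc
    exact hX0 (funext hc)
  obtain ⟨i, hi⟩ := h2
  obtain ⟨q, hq⟩ := exists_dot_ne _ hi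
  obtain ⟨t, ht, h0⟩ := exists_common_zero (n := 1) (fun _ => g k ∘ₗ rankOneRight q) (by simp)
  have h3 := h1 (vecMulVec q t) (by simpa using h0 0)
  rw [mul_vecMulVec] at h3
  apply ht
  funext j
  have h4 := congrFun (congrFun h3 i) j
  rw [vecMulVec_apply] at h4
  exact (mul_eq_zero.1 h4).resolve_left hq

/-- For any three of the `g r` (those with `r ≠ i, j, k`), at most one direction `v = (1, c)`
admits a common zero `u ⊗ v ≠ 0`. -/
lemma bad_subsingleton (i j k : Fin 6) :
    {c : ℂ | ∃ u : Fin 2 → ℂ, u ≠ 0 ∧ ∀ r, r ≠ i → r ≠ j → r ≠ k →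
      g r (vecMulVec u ![1, c]) = 0}.Subsingleton := by
  rintro c ⟨u, hu, hgu⟩ c' ⟨u', hu', hgu'⟩
  by_contra hcc
  obtain ⟨a, ha, hfa⟩ := exists_common_zero ![f i, f j, f k] (by simp [Module.finrank_matrix])
  have hfi : f i a = 0 := hfa 0
  have hfj : f j a = 0 := hfa 1
  have hfk : f k a = 0 := hfa 2
  have hz : ∀ Y, (∀ r, r ≠ i → r ≠ j → r ≠ k → g r Y = 0) → a * Y = 0 := by
    intro Y hY
    rw [H]
    refine Finset.sum_eq_zero fun r _ => ?_
    by_cases h1 : r = i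
    · simp [h1, hfi]
    by_cases h2 : r = j
    · simp [h2, hfj]
    by_cases h3 : r = k
    · simp [h3, hfk]
    simp [hY r h1 h2 h3]
  have hker : ∀ (w : Fin 2 → ℂ) (e : ℂ), a * vecMulVec w ![1, e] = 0 → a *ᵥ w = 0 := by
    intro w e h
    rw [mul_vecMulVec] at h
    funext l
    simpa [vecMulVec_apply] using congrFun (congrFun h l) 0
  obtain ⟨x, rfl⟩ := proportional_of_mulVec a ha u u' hu (hker _ _ (hz _ hgu))
    (hker _ _ (hz _ hgu'))
  have hx : x ≠ 0 := by
    rintro rfl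
    simp at hu'
  -- The forms vanish at `u ⊗ (1, c)` and `u ⊗ (1, c')`, hence at every `u ⊗ t`.
  have hall : ∀ r, r ≠ i → r ≠ j → r ≠ k → ∀ t, g r (vecMulVec u t) = 0 := by
    intro r h1 h2 h3 t
    have e1 := hgu r h1 h2 h3
    have e2 := hgu' r h1 h2 h3
    rw [smul_vecMulVec, map_smul, smul_eq_mul] at e2
    have e2 := (mul_eq_zero.1 e2).resolve_left hx
    have hne : c - c' ≠ 0 := sub_ne_zero.2 hcc
    have ht : t = ((t 1 - c' * t 0) / (c - c')) • ![1, c]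
        + ((c * t 0 - t 1) / (c - c')) • ![1, c'] := by
      funext l
      fin_cases l
      · simp; field_simp; ring
      · simp; field_simp; ring
    rw [ht]
    rw [vecMulVec_add, vecMulVec_smul, vecMulVec_smul, map_add, map_smul, map_smul, e1, e2]
    simp
  -- Then every matrix is a combination of `W i`, `W j`, `W k`, against the dimension count.
  obtain ⟨φ, hφ, hφW⟩ := exists_common_zero
    (V := Module.Dual ℂ (Matrix (Fin 2) (Fin 2) ℂ))
    ![Module.Dual.eval ℂ _ (W i), Module.Dual.eval ℂ _ (W j), Module.Dual.eval ℂ _ (W k)]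
    (by rw [Subspace.dual_finrank_eq]; simp [Module.finrank_matrix])
  have hWi : φ (W i) = 0 := hφW 0
  have hWj : φ (W j) = 0 := hφW 1
  have hWk : φ (W k) = 0 := hφW 2
  have hφ0 : ∀ X t, φ (X * vecMulVec u t) = 0 := by
    intro X t
    rw [H, map_sum]
    refine Finset.sum_eq_zero fun r _ => ?_
    by_cases h1 : r = i
    · simp [h1, hWi]
    by_cases h2 : r = j
    · simp [h2, hWj]
    by_cases h3 : r = k
    · simp [h3, hWk]
    simp [hall r h1 h2 h3]
  obtain ⟨z, hz0⟩ := exists_dot_ne u hu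
  apply hφ
  ext Z
  have hZ : Z = (u ⬝ᵥ z)⁻¹ • ∑ l, vecMulVec (fun m => Z m l) z * vecMulVec u (Pi.single l 1) := by
    rw [dotProduct_comm] at hz0
    simp only [vecMulVec_mul_vecMulVec, dotProduct_comm u z]
    ext m n
    simp only [dotProduct, Fin.sum_univ_two] at hz0
    fin_cases n <;> simp [vecMulVec_apply] <;> field_simp
  rw [hZ, map_smul, map_sum]
  simp [hφ0]

lemma no_six : False := by
  obtain ⟨c, hc⟩ : ∃ c : ℂ, ∀ i j, ∀ u : Fin 2 → ℂ,
      (∀ r, r ≠ i → r ≠ j → r ≠ 5 → g r (vecMulVec u ![1, c]) = 0) → u = 0 := by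
    have hfin : (⋃ i : Fin 6, ⋃ j : Fin 6,
        {c : ℂ | ∃ u : Fin 2 → ℂ, u ≠ 0 ∧ ∀ r, r ≠ i → r ≠ j → r ≠ 5 →
          g r (vecMulVec u ![1, c]) = 0}).Finite :=
      Set.finite_iUnion fun i => Set.finite_iUnion fun j =>
        (bad_subsingleton f g W H i j 5).finite
    obtain ⟨c, hc⟩ := hfin.exists_notMem
    simp only [Set.mem_iUnion, Set.mem_ofPred_eq, not_exists] at hc
    refine ⟨c, fun i j u hu => ?_⟩
    by_contra h
    exact hc i j u ⟨h, hu⟩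
  let d : Fin 2 → ℂ := ![-c, 1]
  have hvd : ![1, c] ⬝ᵥ d = 0 := by simp [d, dotProduct]
  obtain ⟨s, hs, hs5⟩ := exists_common_zero (n := 1)
    (fun _ => dotProductBilin ℂ ℂ (W 5 *ᵥ d)) (by simp)
  replace hs5 : s ⬝ᵥ W 5 *ᵥ d = 0 := by rw [dotProduct_comm]; exact hs5 0
  -- `r₀` spans the common column space of the matrices in the right ideal `R`.
  obtain ⟨r₀, hr₀, hR⟩ : ∃ r₀ : Fin 2 → ℂ, r₀ ≠ 0 ∧
      ∀ a : Matrix (Fin 2) (Fin 2) ℂ, s ᵥ* a = 0 → ∃ t, a = vecMulVec r₀ t := by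
    obtain ⟨r₀, hr₀, h0⟩ := exists_common_zero (n := 1) (fun _ => dotProductBilin ℂ ℂ s) (by simp)
    have h0 : s ⬝ᵥ r₀ = 0 := h0 0
    refine ⟨r₀, hr₀, fun a ha => ?_⟩
    have hcol : ∀ l, ∃ x : ℂ, (fun m => a m l) = x • r₀ := by
      intro l
      refine proportional_of_mulVec (vecMulVec s s) ?_ r₀ _ hr₀ ?_ ?_
      · intro h
        apply hs
        funext m
        simpa [vecMulVec_apply] using congrFun (congrFun h m) m
      · simp [vecMulVec_mulVec, h0]
      · have : s ⬝ᵥ (fun m => a m l) = 0 := congrFun ha l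
        simp [vecMulVec_mulVec, this]
    choose x hx using hcol
    refine ⟨x, ?_⟩
    ext m l
    have := congrFun (hx l) m
    simp only [Pi.smul_apply, smul_eq_mul] at this
    rw [vecMulVec_apply, this, mul_comm]
  obtain ⟨⟨i, hi⟩, ⟨j, hj⟩, hij, hinj⟩ := exists_pair
    (fun r : {r : Fin 6 // r ≠ 5} => f r ∘ₗ rankOneRight r₀) (by
      intro t ht
      have h0 : vecMulVec r₀ t = 0 :=
        eq_zero_of_five f g W H _ 5 fun r hr => ht ⟨r, hr⟩
      exact (vecMulVec_eq_zero.1 h0).resolve_left hr₀)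
  obtain ⟨⟨p, hpi, hpj, hp5⟩, ⟨q, hqi, hqj, hq5⟩, hpq, hginj⟩ := exists_pair
    (fun r : {r : Fin 6 // r ≠ i ∧ r ≠ j ∧ r ≠ 5} => g r ∘ₗ rankOneLeft ![1, c])
    (fun u hu => hc i j u fun r h1 h2 h3 => hu ⟨r, h1, h2, h3⟩)
  simp only [LinearMap.comp_apply, rankOneRight_apply, rankOneLeft_apply, ne_eq,
    Subtype.mk.injEq] at hij hpq hinj hginj
  obtain ⟨m, hm⟩ : ∃ m, ∀ r : Fin 6, r ≠ 5 → r ≠ p → r ≠ q → r ≠ i → r ≠ j → r = m := by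
    have hcard : ({5, p, q, i, j} : Finset (Fin 6))ᶜ.card ≤ 1 := by
      rw [Finset.card_compl]
      have : ({5, p, q, i, j} : Finset (Fin 6)).card = 5 := by
        simp [Finset.card_insert_of_notMem, Ne.symm hp5, Ne.symm hq5, Ne.symm hi, Ne.symm hj,
          hpq, hpi, hpj, hqi, hqj, hij]
      simp [this]
    by_cases hex : ∃ m : Fin 6, m ∈ ({5, p, q, i, j} : Finset (Fin 6))ᶜ
    · obtain ⟨m, hm⟩ := hex
      refine ⟨m, fun r h1 h2 h3 h4 h5 => Finset.card_le_one.1 hcard r ?_ m hm⟩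
      simp [h1, h2, h3, h4, h5]
    · exact ⟨0, fun r h1 h2 h3 h4 h5 => absurd ⟨r, by simp [h1, h2, h3, h4, h5]⟩ hex⟩
  obtain ⟨a, ha, hfa⟩ := exists_common_zero ![f i, f j, f m] (by simp [Module.finrank_matrix])
  have hfi : f i a = 0 := hfa 0
  have hfj : f j a = 0 := hfa 1
  have hfm : f m a = 0 := hfa 2
  have hsa : s ᵥ* a ≠ 0 := by
    intro h
    obtain ⟨t, rfl⟩ := hR a h
    apply ha
    rw [hinj t hfi hfj]
    simp
  let κ : Fin 6 → ℂ := fun r => f r a * (s ⬝ᵥ W r *ᵥ d)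
  have hκ : ∀ Y, (s ᵥ* a) ⬝ᵥ Y *ᵥ d = κ p * g p Y + κ q * g q Y := by
    intro Y
    have h1 : (s ᵥ* a) ⬝ᵥ Y *ᵥ d = ∑ r, κ r * g r Y := by
      rw [← dotProduct_mulVec, mulVec_mulVec, H, sum_mulVec, dotProduct_sum]
      refine Finset.sum_congr rfl fun r _ => ?_
      rw [smul_mulVec, dotProduct_smul, smul_eq_mul]
      ring
    rw [h1]
    refine Finset.sum_eq_add p q hpq (fun r _ hr => ?_) (by simp) (by simp)
    have h0 : κ r = 0 := by
      by_cases h5 : r = 5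
      · simp only [κ, h5, hs5, mul_zero]
      by_cases h4 : r = i
      · simp [κ, h4, hfi]
      by_cases h3 : r = j
      · simp [κ, h3, hfj]
      simp [κ, hm r h5 hr.1 hr.2 h4 h3, hfm]
    simp [h0]
  have hL : ∀ u, κ p * g p (vecMulVec u ![1, c]) + κ q * g q (vecMulVec u ![1, c]) = 0 := by
    intro u
    rw [← hκ, vecMulVec_mulVec, hvd]
    simp
  have hq0 : κ q = 0 := by
    obtain ⟨u, hu, h0⟩ := exists_common_zero (n := 1)
      (fun _ => g p ∘ₗ rankOneLeft ![1, c]) (by simp)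
    have h0 : g p (vecMulVec u ![1, c]) = 0 := h0 0
    have h1 := hL u
    rw [h0, mul_zero, zero_add] at h1
    exact (mul_eq_zero.1 h1).resolve_right fun h => hu (hginj u h0 h)
  have hp0 : κ p = 0 := by
    obtain ⟨u, hu, h0⟩ := exists_common_zero (n := 1)
      (fun _ => g q ∘ₗ rankOneLeft ![1, c]) (by simp)
    have h0 : g q (vecMulVec u ![1, c]) = 0 := h0 0
    have h1 := hL u
    rw [h0, mul_zero, add_zero] at h1
    exact (mul_eq_zero.1 h1).resolve_right fun h => hu (hginj u h h0)
  obtain ⟨u, hu⟩ := exists_dot_ne _ hsa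
  have h1 := hκ (vecMulVec u ![0, 1])
  rw [hp0, hq0, vecMulVec_mulVec] at h1
  apply hu
  simpa [d] using h1

end Winograd

/-! ### Transfer to `U₇` -/

/-- The linear form on 2×2 matrices with the given coefficients of the entries
`(0,0)`, `(0,1)`, `(1,0)`, `(1,1)`. -/
def entryForm (x y z w : ℂ) : Matrix (Fin 2) (Fin 2) ℂ →ₗ[ℂ] ℂ :=
  x • entryLinearMap ℂ ℂ 0 0 + y • entryLinearMap ℂ ℂ 0 1 + z • entryLinearMap ℂ ℂ 1 0 +
    w • entryLinearMap ℂ ℂ 1 1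

lemma entryForm_apply (x y z w : ℂ) (M : Matrix (Fin 2) (Fin 2) ℂ) :
    entryForm x y z w M = x * M 0 0 + y * M 0 1 + z * M 1 0 + w * M 1 1 := by
  simp [entryForm]

/-- In the coordinates used here, `U₇` is the tensor of 2×2 matrix multiplication, so a six-term
decomposition would multiply matrices with six products. -/
lemma not_six (A B C : Fin 6 → Matrix (Fin 2) (Fin 2) ℂ) : U₇ ≠ ∑ j, A j ⊗ₖ (B j ⊗ₖ C j) := by
  intro h
  have key : ∀ i j k i' j' k', U₇ (i, j, k) (i', j', k') =
      ∑ r, A r i i' * (B r j j' * C r k k') := by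
    intro i j k i' j' k'
    rw [h]
    simp [Matrix.sum_apply, kroneckerMap_apply]
  refine no_six (fun r => entryForm (C r 0 1) (C r 1 1) (C r 1 0) (C r 0 0))
    (fun r => entryForm (B r 0 0) (B r 0 1) (B r 1 1) (B r 1 0))
    (fun r => !![A r 0 0, A r 1 1; A r 1 0, A r 0 1]) fun X Y => ?_
  -- The pairs `(i, i')`, `(j, j')`, `(k, k')` index the product, `Y` and `X` respectively.
  have hexp : ∀ i i', ∑ r, (entryForm (C r 0 1) (C r 1 1) (C r 1 0) (C r 0 0) X *
      entryForm (B r 0 0) (B r 0 1) (B r 1 1) (B r 1 0) Y) * A r i i' =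
        (X 0 0 * Y 0 0) * U₇ (i, 0, 0) (i', 0, 1) + (X 0 0 * Y 0 1) * U₇ (i, 0, 0) (i', 1, 1) +
        (X 0 0 * Y 1 0) * U₇ (i, 1, 0) (i', 1, 1) + (X 0 0 * Y 1 1) * U₇ (i, 1, 0) (i', 0, 1) +
        (X 0 1 * Y 0 0) * U₇ (i, 0, 1) (i', 0, 1) + (X 0 1 * Y 0 1) * U₇ (i, 0, 1) (i', 1, 1) +
        (X 0 1 * Y 1 0) * U₇ (i, 1, 1) (i', 1, 1) + (X 0 1 * Y 1 1) * U₇ (i, 1, 1) (i', 0, 1) +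
        (X 1 0 * Y 0 0) * U₇ (i, 0, 1) (i', 0, 0) + (X 1 0 * Y 0 1) * U₇ (i, 0, 1) (i', 1, 0) +
        (X 1 0 * Y 1 0) * U₇ (i, 1, 1) (i', 1, 0) + (X 1 0 * Y 1 1) * U₇ (i, 1, 1) (i', 0, 0) +
        (X 1 1 * Y 0 0) * U₇ (i, 0, 0) (i', 0, 0) + (X 1 1 * Y 0 1) * U₇ (i, 0, 0) (i', 1, 0) +
        (X 1 1 * Y 1 0) * U₇ (i, 1, 0) (i', 1, 0) + (X 1 1 * Y 1 1) * U₇ (i, 1, 0) (i', 0, 0) := by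
    intro i i'
    simp only [key, entryForm_apply, Finset.mul_sum, ← Finset.sum_add_distrib]
    refine Finset.sum_congr rfl fun r _ => ?_
    ring
  ext i i'
  fin_cases i <;> fin_cases i'
  · simpa [Matrix.sum_apply, mul_apply, U₇, S0, S1, S2, S3, kroneckerMap_apply]
      using (hexp 0 0).symm
  · simpa [Matrix.sum_apply, mul_apply, U₇, S0, S1, S2, S3, kroneckerMap_apply]
      using (hexp 1 1).symm
  · simpa [Matrix.sum_apply, mul_apply, U₇, S0, S1, S2, S3, kroneckerMap_apply]
      using (hexp 1 0).symm
  · simpa [Matrix.sum_apply, mul_apply, U₇, S0, S1, S2, S3, kroneckerMap_apply]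
      using (hexp 0 1).symm

/-- Decompositions may be padded with zero terms, so fewer than six terms do not suffice either. -/
lemma seven_le {n : ℕ} (A B C : Fin n → Matrix (Fin 2) (Fin 2) ℂ)
    (h : U₇ = ∑ j, A j ⊗ₖ (B j ⊗ₖ C j)) : 7 ≤ n := by
  by_contra! hn
  have hpad : ∀ m, n ≤ m → ∃ A B C : Fin m → Matrix (Fin 2) (Fin 2) ℂ,
      U₇ = ∑ j, A j ⊗ₖ (B j ⊗ₖ C j) := by
    intro m hm
    induction m, hm using Nat.le_induction with
    | base => exact ⟨A, B, C, h⟩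
    | succ m _ ih =>
      obtain ⟨A, B, C, h⟩ := ih
      refine ⟨Fin.cons 0 A, Fin.cons 0 B, Fin.cons 0 C, ?_⟩
      rw [Fin.sum_univ_succ]
      simpa using h
  obtain ⟨A, B, C, h⟩ := hpad 6 (by omega)
  exact not_six A B C h

/-! ### The upper bound and unitarity -/

/-- Strassen's seven products, in the coordinates of `not_six`. -/
lemma strassen : ∃ A B C : Fin 7 → Matrix (Fin 2) (Fin 2) ℂ,
    U₇ = ∑ j, A j ⊗ₖ (B j ⊗ₖ C j) := by
  refine ⟨![!![1, 1; 0, 0], !![0, -1; 1, 0], !![0, 1; 0, 1], !![1, 0; 1, 0], !![-1, 0; 0, 1],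
      !![0, 1; 0, 0], !![1, 0; 0, 0]],
    ![!![1, 0; 1, 0], !![1, 0; 0, 0], !![0, 1; -1, 0], !![-1, 0; 0, 1], !![0, 0; 1, 0],
      !![1, 1; 0, 0], !![0, 0; 1, 1]],
    ![!![1, 1; 0, 0], !![1, 0; 1, 0], !![0, 1; 0, 0], !![1, 0; 0, 0], !![0, 1; 0, 1],
      !![0, -1; 1, 0], !![-1, 0; 0, 1]], ?_⟩
  ext ⟨i, j, k⟩ ⟨i', j', k'⟩
  fin_cases i <;> fin_cases i' <;> fin_cases j <;> fin_cases j' <;> fin_cases k <;>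
    fin_cases k' <;> simp [Fin.sum_univ_succ, U₇, S0, S1, S2, S3, kroneckerMap_apply]

set_option maxHeartbeats 2000000 in
lemma U₇_unitary : U₇ ∈ Matrix.unitaryGroup (Fin 2 × Fin 2 × Fin 2) ℂ := by
  rw [Matrix.mem_unitaryGroup_iff]
  ext ⟨i, j, k⟩ ⟨i', j', k'⟩
  fin_cases i <;> fin_cases i' <;> fin_cases j <;> fin_cases j' <;> fin_cases k <;>
    fin_cases k' <;>
    simp [mul_apply, Fintype.sum_prod_type, star_apply, one_apply, U₇, S0, S1, S2, S3,
      kroneckerMap_apply]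

theorem stmt6 : U₇ ∈ Matrix.unitaryGroup (Fin 2 × Fin 2 × Fin 2) ℂ ∧ sr U₇ = 7 := by
  refine ⟨U₇_unitary, le_antisymm (Nat.sInf_le strassen) (le_csInf ⟨7, strassen⟩ ?_)⟩
  rintro n ⟨A, B, C, h⟩
  exact seven_le A B C h
end

section
/- The 8×8 complex matrix U₈ = S₀⊗S₀⊗S₀ + S₁⊗S₃⊗S₀ + S₂⊗S₀⊗S₁ + S₃⊗S₂⊗S₁ + S₀⊗S₁⊗S₂ + S₁⊗S₂⊗S₂ + S₂⊗S₁⊗S₃ + S₃⊗S₃⊗S₃ is unitary, and its Schmidt rank equals 7 or 8. -/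
/-! Viewed as a tensor, `U₈` is the bilinear map
`f (x, y) = (x₀y₀ + x₂y₁, x₂y₂ + x₀y₃, x₁y₀ + x₃y₁, x₁y₂ + x₃y₃)` on `ℂ⁴ × ℂ⁴`, and a decomposition
of `U₈` into `r` product terms is a formula `f (x, y) = ∑ j, c j (x) b j (y) a j` with linear forms
`c j`, `b j` and vectors `a j`. The defining sum gives `r = 8`. The point is that `r ≤ 6` is
impossible (`no_short_decomposition`).

If `y ↦ f (·, y)` is injective after restricting `x` to a subspace, at least four of the `c j` are
nonzero on that subspace, as otherwise the common kernel of the corresponding `b j` would be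
nontrivial. For the planes `x₁ = x₃ = 0` and `x₀ = x₂ = 0` this shows that, when `r ≤ 6`, some form
`h = c j₀` involves both a variable among `x₀, x₂` and one among `x₁, x₃`. On the hyperplane
`H = ker h` take coordinates `R = h₀x₀ + h₂x₂ = -(h₁x₁ + h₃x₃)`, `S` (a form in `x₀, x₂`) and `U`
(a form in `x₁, x₃`). On the plane `R = 0` of `H` the four outputs of `f` are linearly independent,
so at most two of the `c j` vanish there: `c j₀` and at most one other, `c j₁`.

The contradiction comes from a Koszul flattening. At most five terms survive on `H`, so the linear
maps `G : H → ℂ⁴` for which every `b j ∘ G` (`j ≠ j₀`) is proportional to `c j` on `H`, and for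
which `b j₁` kills the `R`-component of `G`, are cut out by at most `11` equations in a space of
dimension `12`. A nonzero such `G` makes `f (x, G x')` symmetric on `H`, and
Cartan's lemma forces `G = R ⊗ v`. If `c j` does not vanish on the plane `R = 0`, it is not
proportional to `R`, so `b j (v) = 0`; the same holds for `j = j₁`, hence `f (x, v) = 0` on `H`,
which gives `v = 0`. -/

open Matrix Kronecker Complex

noncomputable def U₈ : Matrix (Fin 2 × Fin 2 × Fin 2) (Fin 2 × Fin 2 × Fin 2) ℂ :=
  S0 ⊗ₖ (S0 ⊗ₖ S0) + S1 ⊗ₖ (S3 ⊗ₖ S0) + S2 ⊗ₖ (S0 ⊗ₖ S1) + S3 ⊗ₖ (S2 ⊗ₖ S1) +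
    S0 ⊗ₖ (S1 ⊗ₖ S2) + S1 ⊗ₖ (S2 ⊗ₖ S2) + S2 ⊗ₖ (S1 ⊗ₖ S3) + S3 ⊗ₖ (S3 ⊗ₖ S3)


/-- The bilinear map `f (x, y)` whose structure tensor is `U₈`. -/
def bil (x y : Fin 4 → ℂ) : Fin 4 → ℂ :=
  ![x 0 * y 0 + x 2 * y 1, x 2 * y 2 + x 0 * y 3, x 1 * y 0 + x 3 * y 1, x 1 * y 2 + x 3 * y 3]

/-- Fewer linear equations than unknowns have a nonzero common solution. -/
lemma exists_ne_zero_of_card_lt {ι V : Type*} [Fintype ι] [AddCommGroup V] [Module ℂ V]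
    [FiniteDimensional ℂ V] (φ : ι → V →ₗ[ℂ] ℂ) (h : Fintype.card ι < Module.finrank ℂ V) :
    ∃ v : V, v ≠ 0 ∧ ∀ i, φ i v = 0 := by
  have hk : LinearMap.ker (LinearMap.pi φ) ≠ ⊥ :=
    LinearMap.ker_ne_bot_of_finrank_lt (by simpa using h)
  obtain ⟨v, hv, hv0⟩ := (Submodule.ne_bot_iff _).1 hk
  exact ⟨v, hv0, fun i => congrFun (LinearMap.mem_ker.1 hv) i⟩

/-- A set of fewer than four vectors of `ℂ⁴` has a nonzero common orthogonal vector. -/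
lemma exists_ne_zero_dotProduct {ι : Type*} (s : Finset ι) (w : ι → Fin 4 → ℂ) (h : s.card ≤ 3) :
    ∃ v : Fin 4 → ℂ, v ≠ 0 ∧ ∀ i ∈ s, w i ⬝ᵥ v = 0 := by
  obtain ⟨v, hv, h0⟩ := exists_ne_zero_of_card_lt
    (fun i : s => dotProductBilin ℂ ℂ (w i)) (by simp; omega)
  exact ⟨v, hv, fun i hi => h0 ⟨i, hi⟩⟩

/-- Proportionality to a given linear form on `ℂ³` is implied by two linear equations. -/
lemma exists_two_equations (γ : Fin 3 → ℂ) : ∃ u : Fin 2 → Fin 3 → ℂ, ∀ ξ : Fin 3 → ℂ,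
    (∀ t, u t ⬝ᵥ ξ = 0) → ∀ i k, γ i * ξ k = γ k * ξ i := by
  by_cases h0 : γ 0 = 0
  · by_cases h1 : γ 1 = 0
    · refine ⟨![![1, 0, 0], ![0, 1, 0]], fun ξ h i k => ?_⟩
      have e0 := h 0
      have e1 := h 1
      simp [dotProduct, Fin.sum_univ_three] at e0 e1
      fin_cases i <;> fin_cases k <;> simp [h0, h1, e0, e1]
    · refine ⟨![![1, 0, 0], ![0, -γ 2, γ 1]], fun ξ h i k => ?_⟩
      have e0 := h 0
      have e1 := h 1
      simp [dotProduct, Fin.sum_univ_three] at e0 e1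
      fin_cases i <;> fin_cases k <;> simp [h0, e0] <;>
        first | linear_combination e1 | linear_combination -e1
  · refine ⟨![![-γ 1, γ 0, 0], ![-γ 2, 0, γ 0]], fun ξ h i k => ?_⟩
    have e0 := h 0
    have e1 := h 1
    simp [dotProduct, Fin.sum_univ_three] at e0 e1
    have e2 : γ 1 * ξ 2 = γ 2 * ξ 1 := by
      apply mul_left_cancel₀ h0
      linear_combination γ 1 * e1 - γ 2 * e0
    fin_cases i <;> fin_cases k <;> simp <;>
      first
        | linear_combination e0
        | linear_combination -e0
        | linear_combination e1
        | linear_combination -e1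
        | linear_combination e2
        | linear_combination -e2

/-- A unimodular `2 × 2` system has only the trivial solution. -/
lemma eq_zero_of_unimodular {h h' p p' y y' : ℂ} (hd : h * p' - h' * p = 1)
    (e1 : h * y' - h' * y = 0) (e2 : p' * y - p * y' = 0) : y = 0 ∧ y' = 0 :=
  ⟨by linear_combination -y * hd + p * e1 + h * e2,
    by linear_combination -y' * hd + p' * e1 + h' * e2⟩

lemma exists_unimodular {h h' : ℂ} (hh : ¬(h = 0 ∧ h' = 0)) : ∃ p p', h * p' - h' * p = 1 := by
  by_cases h0 : h = 0
  · have h1 : h' ≠ 0 := fun h1 => hh ⟨h0, h1⟩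
    exact ⟨-h'⁻¹, 0, by field_simp; simp⟩
  · exact ⟨0, h⁻¹, by field_simp; simp⟩

section

variable {r : ℕ} {a b c : Fin r → Fin 4 → ℂ}

/-- If `x` ranges over the plane spanned by `u, w` and `f (x, y)` determines `y` there, then at
least four terms are nonzero on that plane. -/
lemma card_killed_le_of_injective (hf : ∀ x y, bil x y = ∑ j, ((c j ⬝ᵥ x) * (b j ⬝ᵥ y)) • a j)
    (u w : Fin 4 → ℂ) (hi : ∀ y, bil u y = 0 → bil w y = 0 → y = 0) :
    (Finset.univ.filter fun j => c j ⬝ᵥ u = 0 ∧ c j ⬝ᵥ w = 0).card + 4 ≤ r := by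
  by_contra hlt
  have hc := Finset.card_filter_add_card_filter_not (s := (Finset.univ : Finset (Fin r)))
    (fun j => c j ⬝ᵥ u = 0 ∧ c j ⬝ᵥ w = 0)
  rw [Finset.card_univ, Fintype.card_fin] at hc
  obtain ⟨y, hy, h0⟩ := exists_ne_zero_dotProduct
    (Finset.univ.filter fun j => ¬(c j ⬝ᵥ u = 0 ∧ c j ⬝ᵥ w = 0)) b (by omega)
  refine hy (hi y ?_ ?_) <;> rw [hf] <;> refine Finset.sum_eq_zero fun j _ => ?_ <;>
    by_cases hj : c j ⬝ᵥ u = 0 ∧ c j ⬝ᵥ w = 0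
  · simp [hj.1]
  · simp [h0 j (by simpa using hj)]
  · simp [hj.2]
  · simp [h0 j (by simpa using hj)]

/-- If the four outputs of `f` are linearly independent for `x` in the plane spanned by `u, w`,
then at least four terms are nonzero on that plane. -/
lemma card_killed_le_of_outputs (hf : ∀ x y, bil x y = ∑ j, ((c j ⬝ᵥ x) * (b j ⬝ᵥ y)) • a j)
    (u w : Fin 4 → ℂ)
    (hi : ∀ z : Fin 4 → ℂ, (∀ y, bil u y ⬝ᵥ z = 0) → (∀ y, bil w y ⬝ᵥ z = 0) → z = 0) :
    (Finset.univ.filter fun j => c j ⬝ᵥ u = 0 ∧ c j ⬝ᵥ w = 0).card + 4 ≤ r := by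
  by_contra hlt
  have hc := Finset.card_filter_add_card_filter_not (s := (Finset.univ : Finset (Fin r)))
    (fun j => c j ⬝ᵥ u = 0 ∧ c j ⬝ᵥ w = 0)
  rw [Finset.card_univ, Fintype.card_fin] at hc
  obtain ⟨z, hz, h0⟩ := exists_ne_zero_dotProduct
    (Finset.univ.filter fun j => ¬(c j ⬝ᵥ u = 0 ∧ c j ⬝ᵥ w = 0)) a (by omega)
  refine hz (hi z ?_ ?_) <;> intro y <;> rw [hf, sum_dotProduct] <;>
    refine Finset.sum_eq_zero fun j _ => ?_ <;> rw [smul_dotProduct] <;>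
    by_cases hj : c j ⬝ᵥ u = 0 ∧ c j ⬝ᵥ w = 0
  · simp [hj.1]
  · simp [h0 j (by simpa using hj)]
  · simp [hj.2]
  · simp [h0 j (by simpa using hj)]

/-- Some form of a short decomposition involves both `{x₀, x₂}` and `{x₁, x₃}`. -/
lemma exists_mixed_form (hr : r ≤ 6) (hpos : 0 < r)
    (hf : ∀ x y, bil x y = ∑ j, ((c j ⬝ᵥ x) * (b j ⬝ᵥ y)) • a j) :
    ∃ j, ¬(c j 0 = 0 ∧ c j 2 = 0) ∧ ¬(c j 1 = 0 ∧ c j 3 = 0) := by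
  by_contra! hno
  have h1 := card_killed_le_of_injective hf ![1, 0, 0, 0] ![0, 0, 1, 0] (by
    intro y e1 e2
    have e10 := congrFun e1 0
    have e11 := congrFun e1 1
    have e20 := congrFun e2 0
    have e21 := congrFun e2 1
    simp [bil] at e10 e11 e20 e21
    ext i; fin_cases i <;> simp [*])
  have h2 := card_killed_le_of_injective hf ![0, 1, 0, 0] ![0, 0, 0, 1] (by
    intro y e1 e2
    have e10 := congrFun e1 2
    have e11 := congrFun e1 3
    have e20 := congrFun e2 2
    have e21 := congrFun e2 3
    simp [bil] at e10 e11 e20 e21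
    ext i; fin_cases i <;> simp [*])
  simp only [dotProduct, Fin.sum_univ_four] at h1 h2
  simp at h1 h2
  have hcov : (Finset.univ : Finset (Fin r)) ⊆
      (Finset.univ.filter fun j => c j 0 = 0 ∧ c j 2 = 0) ∪
      (Finset.univ.filter fun j => c j 1 = 0 ∧ c j 3 = 0) := by
    intro j _
    have := hno j
    simp only [Finset.mem_union, Finset.mem_filter, Finset.mem_univ, true_and]
    tauto
  have := (Finset.card_le_card hcov).trans (Finset.card_union_le _ _)
  rw [Finset.card_univ, Fintype.card_fin] at this
  omega

/-- The tensor of `f` is not a sum of at most six product tensors. -/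
lemma no_short_decomposition (hr : r ≤ 6)
    (hf : ∀ x y, bil x y = ∑ j, ((c j ⬝ᵥ x) * (b j ⬝ᵥ y)) • a j) : False := by
  have hpos : 0 < r := by
    rcases Nat.eq_zero_or_pos r with h | h
    · subst h
      have := congrFun (hf ![1, 0, 0, 0] ![1, 0, 0, 0]) 0
      simp [bil] at this
    · exact h
  obtain ⟨j₀, hA, hB⟩ := exists_mixed_form hr hpos hf
  obtain ⟨p0, p2, hp⟩ := exists_unimodular hA
  obtain ⟨p1, p3, hq⟩ := exists_unimodular hB
  set h := c j₀ with hh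
  -- The basis of `ker h` dual to the coordinates `R, S, U`.
  let e : Fin 3 → Fin 4 → ℂ :=
    ![![p2, -p3, -p0, p1], ![-h 2, 0, h 0, 0], ![0, -h 3, 0, h 1]]
  have he : ∀ i, h ⬝ᵥ e i = 0 := by
    intro i
    fin_cases i <;> simp [e, dotProduct, Fin.sum_univ_four]
    · linear_combination hp - hq
    · ring
    · ring
  have hK := card_killed_le_of_outputs hf (e 1) (e 2) (by
    intro z e1 e2
    have t1 := fun i => e1 (Pi.single i 1)
    have t2 := fun i => e2 (Pi.single i 1)
    have s0 := t1 0
    have s1 := t1 1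
    have s2 := t1 2
    have s3 := t1 3
    have u0 := t2 0
    have u1 := t2 1
    have u2 := t2 2
    have u3 := t2 3
    simp [e, bil, dotProduct, Fin.sum_univ_four] at s0 s1 s2 s3 u0 u1 u2 u3
    ext i
    fin_cases i <;> simp <;> by_contra hz <;> simp_all)
  set K := Finset.univ.filter fun j => c j ⬝ᵥ e 1 = 0 ∧ c j ⬝ᵥ e 2 = 0 with hKdef
  have hj₀K : j₀ ∈ K := by simp [hKdef, ← hh, he]
  obtain ⟨j₁, hj₁⟩ : ∃ j₁, K.erase j₀ ⊆ {j₁} := by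
    have : Nonempty (Fin r) := ⟨j₀⟩
    apply Finset.card_le_one_iff_subset_singleton.1
    rw [Finset.card_erase_of_mem hj₀K]
    omega
  choose u hu using fun j => exists_two_equations fun i => c j ⬝ᵥ e i
  -- `G i` is the image of `e i` under the map `G : ker h → ℂ⁴`.
  let φ : ({j // j ≠ j₀} × Fin 2) ⊕ Unit → (Fin 3 → Fin 4 → ℂ) →ₗ[ℂ] ℂ :=
    Sum.elim
      (fun q => ∑ i, u q.1 q.2 i • (dotProductBilin ℂ ℂ (b q.1) ∘ₗ LinearMap.proj i))
      (fun _ => dotProductBilin ℂ ℂ (b j₁) ∘ₗ LinearMap.proj 0)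
  obtain ⟨G, hG, hφ⟩ := exists_ne_zero_of_card_lt φ (by
    simp [Fintype.card_subtype_compl, Module.finrank_pi_fintype]
    omega)
  have hprop : ∀ j ≠ j₀, ∀ i k,
      (c j ⬝ᵥ e i) * (b j ⬝ᵥ G k) = (c j ⬝ᵥ e k) * (b j ⬝ᵥ G i) := by
    intro j hj
    refine hu j (fun k => b j ⬝ᵥ G k) fun t => ?_
    simpa [φ, dotProduct] using hφ (Sum.inl (⟨j, hj⟩, t))
  have hlast : b j₁ ⬝ᵥ G 0 = 0 := by simpa [φ] using hφ (Sum.inr ())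
  have hsym : ∀ i k, bil (e i) (G k) = bil (e k) (G i) := by
    intro i k
    rw [hf, hf]
    refine Finset.sum_congr rfl fun j _ => ?_
    by_cases hj : j = j₀
    · simp [hj, ← hh, he]
    · rw [hprop j hj i k]
  -- Cartan's lemma: the first two outputs give `G 2 = 0`, the last two `G 1 = 0`.
  have hU : G 2 = 0 := by
    have a0 := congrFun (hsym 1 2) 0
    have a1 := congrFun (hsym 1 2) 1
    have b0 := congrFun (hsym 0 2) 0
    have b1 := congrFun (hsym 0 2) 1
    simp [e, bil] at a0 a1 b0 b1
    have k0 := eq_zero_of_unimodular (y := G 2 0) (y' := G 2 1) hp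
      (by linear_combination a0) (by linear_combination b0)
    have k1 := eq_zero_of_unimodular (y := G 2 3) (y' := G 2 2) hp
      (by linear_combination a1) (by linear_combination b1)
    ext i; fin_cases i <;> simp [k0, k1]
  have hS : G 1 = 0 := by
    have a0 := congrFun (hsym 2 1) 2
    have a1 := congrFun (hsym 2 1) 3
    have b0 := congrFun (hsym 0 1) 2
    have b1 := congrFun (hsym 0 1) 3
    simp [e, bil] at a0 a1 b0 b1
    have k0 := eq_zero_of_unimodular (y := G 1 0) (y' := G 1 1) hq
      (by linear_combination a0) (by linear_combination -b0)
    have k1 := eq_zero_of_unimodular (y := G 1 2) (y' := G 1 3) hq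
      (by linear_combination a1) (by linear_combination -b1)
    ext i; fin_cases i <;> simp [k0, k1]
  have hb : ∀ j ≠ j₀, b j ⬝ᵥ G 0 = 0 := by
    intro j hj
    by_cases hjK : j ∈ K
    · have : j = j₁ := by simpa using hj₁ (Finset.mem_erase.2 ⟨hj, hjK⟩)
      rw [this, hlast]
    · by_contra hne
      have q1 := hprop j hj 1 0
      have q2 := hprop j hj 2 0
      simp [hU, hS, hne] at q1 q2
      exact hjK (by simp [hKdef, q1, q2])
  have hzero : ∀ i, bil (e i) (G 0) = 0 := by
    intro i
    rw [hf]
    refine Finset.sum_eq_zero fun j _ => ?_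
    by_cases hj : j = j₀
    · simp [hj, ← hh, he]
    · simp [hb j hj]
  have hR : G 0 = 0 := by
    have a0 := congrFun (hzero 1) 0
    have a1 := congrFun (hzero 1) 1
    have b0 := congrFun (hzero 0) 0
    have b1 := congrFun (hzero 0) 1
    simp [e, bil] at a0 a1 b0 b1
    have k0 := eq_zero_of_unimodular (y := G 0 0) (y' := G 0 1) hp
      (by linear_combination a0) (by linear_combination b0)
    have k1 := eq_zero_of_unimodular (y := G 0 3) (y' := G 0 2) hp
      (by linear_combination a1) (by linear_combination b1)
    ext i; fin_cases i <;> simp [k0, k1]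
  apply hG
  ext i k
  fin_cases i <;> simp [hU, hS, hR]

end

/-- The coordinates of a `2 × 2` matrix in the basis `S0, S1, S2, S3`. -/
def coords (A : Matrix (Fin 2) (Fin 2) ℂ) : Fin 4 → ℂ := ![A 0 0, A 0 1, A 1 0, A 1 1]

/-- A decomposition of `U₈` into product matrices yields one of the bilinear map `bil`. -/
lemma bil_eq_of_decomposition {r : ℕ} {A B C : Fin r → Matrix (Fin 2) (Fin 2) ℂ}
    (hU : U₈ = ∑ j, A j ⊗ₖ (B j ⊗ₖ C j)) (x y : Fin 4 → ℂ) :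
    bil x y = ∑ j, ((coords (C j) ⬝ᵥ x) * (coords (B j) ⬝ᵥ y)) • coords (A j) := by
  have key : ∀ i i' k k' l l', U₈ (i, k, l) (i', k', l') =
      ∑ j, A j i i' * (B j k k' * C j l l') := by
    intro i i' k k' l l'
    rw [hU, Matrix.sum_apply]
    simp [kroneckerMap_apply]
  have row : ∀ i i', ∑ j, (coords (C j) ⬝ᵥ x) * (coords (B j) ⬝ᵥ y) * A j i i' =
      ∑ k, ∑ k', ∑ l, ∑ l', U₈ (i, k, l) (i', k', l') *
        (!![x 0, x 1; x 2, x 3] l l' * !![y 0, y 1; y 2, y 3] k k') := by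
    intro i i'
    simp only [key, Fin.sum_univ_two, Finset.sum_mul, ← Finset.sum_add_distrib]
    refine Finset.sum_congr rfl fun j _ => ?_
    simp [coords, dotProduct, Fin.sum_univ_four]
    ring
  ext t
  rw [Finset.sum_apply]
  fin_cases t
  · have := row 0 0
    simp [coords, bil] at this ⊢
    rw [this]
    simp [U₈, S0, S1, S2, S3, kroneckerMap_apply]
  · have := row 0 1
    simp [coords, bil] at this ⊢
    rw [this]
    simp [U₈, S0, S1, S2, S3, kroneckerMap_apply]
  · have := row 1 0
    simp [coords, bil] at this ⊢
    rw [this]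
    simp [U₈, S0, S1, S2, S3, kroneckerMap_apply]
  · have := row 1 1
    simp [coords, bil] at this ⊢
    rw [this]
    simp [U₈, S0, S1, S2, S3, kroneckerMap_apply]

set_option maxHeartbeats 1000000 in
lemma U₈_mem_unitaryGroup : U₈ ∈ Matrix.unitaryGroup (Fin 2 × Fin 2 × Fin 2) ℂ := by
  rw [Matrix.mem_unitaryGroup_iff]
  ext ⟨i, k, l⟩ ⟨i', k', l'⟩
  rw [Matrix.mul_apply]
  fin_cases i <;> fin_cases k <;> fin_cases l <;> fin_cases i' <;> fin_cases k' <;>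
    fin_cases l' <;>
    simp [U₈, S0, S1, S2, S3, kroneckerMap_apply, Fintype.sum_prod_type]

theorem stmt10 : U₈ ∈ Matrix.unitaryGroup (Fin 2 × Fin 2 × Fin 2) ℂ ∧
    (sr U₈ = 7 ∨ sr U₈ = 8) := by
  refine ⟨U₈_mem_unitaryGroup, ?_⟩
  have h8 : 8 ∈ {r | ∃ A B C : Fin r → Matrix (Fin 2) (Fin 2) ℂ,
      U₈ = ∑ j, A j ⊗ₖ (B j ⊗ₖ C j)} :=
    ⟨![S0, S1, S2, S3, S0, S1, S2, S3], ![S0, S3, S0, S2, S1, S2, S1, S3],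
      ![S0, S0, S1, S1, S2, S2, S3, S3], by simp [Fin.sum_univ_eight, U₈]⟩
  have hle : sr U₈ ≤ 8 := Nat.sInf_le h8
  obtain ⟨A, B, C, hU⟩ := Nat.sInf_mem ⟨8, h8⟩
  have hge : ¬ sr U₈ ≤ 6 := fun h => no_short_decomposition h (bil_eq_of_decomposition hU)
  omega
end

section
/- Let T = S₀⊗I₂ + S₃⊗σ₁ denote the CNOT gate, and let T_CA = I₂⊗I₂⊗S₀ + σ₁⊗I₂⊗S₃ denote the CNOT gate with control on the third qubit and target on the first qubit. Then the 8×8 unitary matrix M₃ = (T⊗I₂)·(I₂⊗T)·T_CA, obtained as the product of three CNOT gates, has Schmidt rank exactly 7. -/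
/-!
In the standard basis `M₃` is the permutation `(a, b, c) ↦ (a + c, a + b + c, b + c)` over `ZMod 2`.
Relabelling the matrix units of the three factors turns it into the tensor
`∑ x_{cd} ⊗ y_{db} ⊗ z_{bc}` of 2×2 matrix multiplication, so that its Schmidt rank is the rank of
that tensor: Strassen's algorithm gives `≤ 7`, and Winograd's theorem gives `≥ 7`.

For the lower bound suppose `X * Y = ∑ k, (f k X * g k Y) • C k` with six terms.

* Some two of the `g k` vanish together at an invertible matrix. Otherwise all the common kernels
  `ker (g i) ∩ ker (g j)` are totally isotropic planes for the polarized determinant, hence equal to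
  their orthogonal complements, and the vectors representing the `g i` lie in every kernel; this
  forces `g = 0` (`mem_kernel_of_singular`, `no_six`).
* Multiplying on the right by that matrix, one may assume `g i 1 = g j 1 = 0`. The other four terms
  then provide a basis in which right multiplication by any element of the common kernel is
  diagonal; as the kernel is at least two-dimensional, it contains an idempotent `P ≠ 0, 1`.
  On `X * (1 - P)` and on `X * P` the algorithm uses complementary sets of these four terms, together
  with the terms `i` and `j`. Each restricted algorithm needs four terms (`four_le_card`), so both
  have exactly four, and then `g i` vanishes on `P * Y` and on `(1 - P) * Y` (`annihilate`).
  So `g i = 0`, while term `i` cannot be dispensed with (`no_six_normalized`).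
-/

open Matrix Kronecker Complex

/-- Reassociation `((ℂ²⊗ℂ²)⊗ℂ²) ≃ (ℂ²⊗(ℂ²⊗ℂ²))` at the level of matrix indices. -/
def matAssoc (M : Matrix ((Fin 2 × Fin 2) × Fin 2) ((Fin 2 × Fin 2) × Fin 2) ℂ) :
    Matrix (Fin 2 × Fin 2 × Fin 2) (Fin 2 × Fin 2 × Fin 2) ℂ :=
  Matrix.reindex (Equiv.prodAssoc (Fin 2) (Fin 2) (Fin 2))
    (Equiv.prodAssoc (Fin 2) (Fin 2) (Fin 2)) M

/-- The CNOT gate as a 4×4 matrix. -/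
def Tcnot : Matrix (Fin 2 × Fin 2) (Fin 2 × Fin 2) ℂ := S0 ⊗ₖ I2 + S3 ⊗ₖ σ1

noncomputable def Tca : Matrix (Fin 2 × Fin 2 × Fin 2) (Fin 2 × Fin 2 × Fin 2) ℂ :=
  I2 ⊗ₖ (I2 ⊗ₖ S0) + σ1 ⊗ₖ (I2 ⊗ₖ S3)

noncomputable def M₃ : Matrix (Fin 2 × Fin 2 × Fin 2) (Fin 2 × Fin 2 × Fin 2) ℂ :=
  matAssoc (Tcnot ⊗ₖ I2) * (I2 ⊗ₖ Tcnot) * Tca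

/-! ### `M₃` as a permutation matrix, and Strassen's algorithm -/

/-- The space of complex 2×2 matrices. -/
abbrev Mat2 := Matrix (Fin 2) (Fin 2) ℂ

lemma finrank_mat2 : Module.finrank ℂ Mat2 = 4 := by
  simp [Module.finrank_matrix]

lemma M3_apply (x y : Fin 2 × Fin 2 × Fin 2) :
    M₃ x y = if x.1 = y.1 + y.2.2 ∧ x.2.1 = x.1 + y.2.1 ∧ x.2.2 = y.2.1 + y.2.2
      then 1 else 0 := by
  obtain ⟨a', b', c'⟩ := x
  obtain ⟨a, b, c⟩ := y
  fin_cases a' <;> fin_cases b' <;> fin_cases c' <;> fin_cases a <;> fin_cases b <;>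
    fin_cases c <;>
    simp [M₃, Tca, Tcnot, matAssoc, S0, S3, σ1, I2, Matrix.mul_apply, Fintype.sum_prod_type,
      Fin.sum_univ_two, Matrix.one_apply]

lemma M3_unitary : M₃ ∈ Matrix.unitaryGroup (Fin 2 × Fin 2 × Fin 2) ℂ := by
  rw [Matrix.mem_unitaryGroup_iff]
  ext ⟨a', b', c'⟩ ⟨a, b, c⟩
  simp only [Matrix.mul_apply, Matrix.star_apply, M3_apply, Fintype.sum_prod_type,
    Fin.sum_univ_two]
  fin_cases a' <;> fin_cases b' <;> fin_cases c' <;> fin_cases a <;> fin_cases b <;>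
    fin_cases c <;> simp

lemma M3_seven : ∃ A B C : Fin 7 → Mat2, M₃ = ∑ j, A j ⊗ₖ (B j ⊗ₖ C j) := by
  -- `α`, `β`, `γ` are the coefficient matrices of Strassen's algorithm; `γ` is transposed.
  let α : Fin 7 → Mat2 := ![!![1, 0; 0, 1], !![0, 0; 1, 1], !![1, 0; 0, 0], !![0, 0; 0, 1],
    !![1, 1; 0, 0], !![-1, 0; 1, 0], !![0, 1; 0, -1]]
  let β : Fin 7 → Mat2 := ![!![1, 0; 0, 1], !![1, 0; 0, 0], !![0, 1; 0, -1], !![-1, 0; 1, 0],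
    !![0, 0; 0, 1], !![1, 1; 0, 0], !![0, 0; 1, 1]]
  let γ : Fin 7 → Mat2 := ![!![1, 0; 0, 1], !![0, 1; 0, -1], !![0, 0; 1, 1], !![1, 1; 0, 0],
    !![-1, 0; 1, 0], !![0, 0; 0, 1], !![1, 0; 0, 0]]
  refine ⟨fun j => Matrix.of fun d a => α j (a + d) d, fun j => Matrix.of fun b' b => β j (b + b') b,
    fun j => Matrix.of fun c' c => γ j (c + c') c, ?_⟩
  ext ⟨a', b', c'⟩ ⟨a, b, c⟩
  simp only [M3_apply, Matrix.sum_apply, Matrix.kroneckerMap_apply, Fin.sum_univ_seven,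
    Matrix.of_apply]
  fin_cases a' <;> fin_cases b' <;> fin_cases c' <;> fin_cases a <;> fin_cases b <;>
    fin_cases c <;> simp [α, β, γ]

/-! ### From Kronecker decompositions to bilinear algorithms -/

/-- A Kronecker decomposition of `M₃` yields a bilinear algorithm for 2×2 matrix multiplication. -/
lemma bilinear_of_decomp {r : ℕ} (A B C : Fin r → Mat2) (h : M₃ = ∑ j, A j ⊗ₖ (B j ⊗ₖ C j)) :
    ∃ (f g : Fin r → Mat2 →ₗ[ℂ] ℂ) (D : Fin r → Mat2),
      ∀ X Y : Mat2, X * Y = ∑ k, (f k X * g k Y) • D k := by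
  have key : ∀ c d d' b b' c' : Fin 2,
      ∑ j, A j d (c + d) * (B j (d' + b) b * C j (b' + c') c') =
        if c = c' ∧ d = d' ∧ b = b' then 1 else 0 := by
    intro c d d' b b' c'
    have h1 := M3_apply (d, d' + b, b' + c') (c + d, b, c')
    rw [h] at h1
    simp only [Matrix.sum_apply, Matrix.kroneckerMap_apply] at h1
    rw [h1]
    congr 1
    clear h1
    clear h
    clear A B C
    revert c d d' b b' c'
    simp only [eq_iff_iff]
    decide
  let L (W : Mat2) : Mat2 →ₗ[ℂ] ℂ :=
    { toFun := fun X => ∑ p, ∑ q, X p q * W p q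
      map_add' := by intro X Y; simp [Finset.sum_add_distrib, add_mul]
      map_smul' := by intro X Y; simp [mul_assoc, mul_add] }
  refine ⟨fun j => L (Matrix.of fun c d => A j d (c + d)),
    fun j => L (Matrix.of fun d b => B j (d + b) b),
    fun j => Matrix.of fun c b => C j (b + c) c, fun X Y => ?_⟩
  ext c b
  have : ∀ j, (L (Matrix.of fun c d => A j d (c + d)) X * L (Matrix.of fun d b => B j (d + b) b) Y)
      * C j (b + c) c = ∑ p, ∑ q, ∑ s, ∑ t, (X p q * Y s t) *
        (A j q (p + q) * (B j (s + t) t * C j (b + c) c)) := by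
    intro j
    simp only [L, LinearMap.coe_mk, AddHom.coe_mk, Matrix.of_apply, Fin.sum_univ_two]
    ring
  simp only [Matrix.sum_apply, Matrix.smul_apply, Matrix.of_apply, smul_eq_mul]
  rw [Finset.sum_congr rfl fun j _ => this j]
  rw [Finset.sum_comm, Finset.sum_congr rfl fun p _ => Finset.sum_comm]
  rw [Finset.sum_congr rfl fun p _ => Finset.sum_congr rfl fun q _ => Finset.sum_comm]
  rw [Finset.sum_congr rfl fun p _ => Finset.sum_congr rfl fun q _ =>
    Finset.sum_congr rfl fun s _ => Finset.sum_comm]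
  simp only [← Finset.mul_sum, key, Matrix.mul_apply]
  fin_cases c <;> fin_cases b <;> simp [Fin.sum_univ_two]

/-! ### Six-term algorithms with two second factors vanishing at the identity -/

/-- The matrices `X * R * Y` span `Mat2` when `R ≠ 0`, so at least four rank-one terms are needed
to compute them all. -/
lemma four_le_card {f g : Fin 6 → Mat2 →ₗ[ℂ] ℂ} {C : Fin 6 → Mat2} {R : Mat2} (hR : R ≠ 0)
    {T : Finset (Fin 6)}
    (h : ∀ X Y, X * R * Y = ∑ k ∈ T, (f k (X * R) * g k Y) • C k) :
    ⊤ ≤ Submodule.span ℂ (Set.range fun k : T => C k) ∧ 4 ≤ T.card := by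
  have hspan : ⊤ ≤ Submodule.span ℂ (Set.range fun k : T => C k) := by
    obtain ⟨p, q, hpq⟩ : ∃ p q, R p q ≠ 0 := by
      by_contra! hc
      exact hR (by ext p q; simpa using hc p q)
    intro Z _
    rw [Matrix.matrix_eq_sum_single Z]
    refine Submodule.sum_mem _ fun a _ => Submodule.sum_mem _ fun b _ => ?_
    have : Matrix.single a b (Z a b) =
        Matrix.single a p (Z a b * (R p q)⁻¹) * R * Matrix.single q b 1 := by
      rw [Matrix.single_mul_mul_single]
      congr 1
      field_simp
    rw [this, h]
    refine Submodule.sum_mem _ fun k hk => Submodule.smul_mem _ _ ?_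
    exact Submodule.subset_span ⟨⟨k, hk⟩, rfl⟩
  refine ⟨hspan, ?_⟩
  have := finrank_le_of_span_eq_top (R := ℂ) (top_le_iff.mp hspan)
  simpa [finrank_mat2] using this

/-- In a four-term computation of `X * R * Y` the output matrices are linearly independent and
every term is used, so every second factor kills the right annihilator of `R`. -/
lemma annihilate {f g : Fin 6 → Mat2 →ₗ[ℂ] ℂ} {C : Fin 6 → Mat2} {R R' : Mat2} (hR : R ≠ 0)
    {T : Finset (Fin 6)} (hT : T.card = 4) (hRR : R * R' = 0)
    (h : ∀ X Y, X * R * Y = ∑ k ∈ T, (f k (X * R) * g k Y) • C k) {k : Fin 6} (hk : k ∈ T) :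
    (∀ Y, g k (R' * Y) = 0) ∧ ∃ Y, g k Y ≠ 0 := by
  have hspan := (four_le_card hR h).1
  have hli : LinearIndependent ℂ (fun k : T => C k) :=
    linearIndependent_of_top_le_span_of_card_eq_finrank hspan (by simp [hT, finrank_mat2])
  obtain ⟨X, Y₀, hX⟩ : ∃ X Y, f k (X * R) * g k Y ≠ 0 := by
    by_contra! hc
    have := (four_le_card (f := f) (g := g) (C := C) (T := T.erase k) hR (by
      intro X Y
      rw [h, ← Finset.add_sum_erase _ _ hk, hc, zero_smul, zero_add])).2
    rw [Finset.card_erase_of_mem hk] at this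
    omega
  refine ⟨fun Y => ?_, Y₀, right_ne_zero_of_mul hX⟩
  have h0 : ∑ k : T, (f k (X * R) * g k (R' * Y)) • C k = 0 := by
    rw [Finset.sum_coe_sort T fun k => (f k (X * R) * g k (R' * Y)) • C k, ← h,
      Matrix.mul_assoc, ← Matrix.mul_assoc R, hRR]
    simp
  have := Fintype.linearIndependent_iff.mp hli _ h0 ⟨k, hk⟩
  exact (mul_eq_zero.mp this).resolve_left (left_ne_zero_of_mul hX)

lemma two_le_finrank_ker (u v : Mat2 →ₗ[ℂ] ℂ) :
    2 ≤ Module.finrank ℂ (LinearMap.ker (u.prod v)) := by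
  have h1 := LinearMap.finrank_range_add_finrank_ker (u.prod v)
  have h2 := Submodule.finrank_le (LinearMap.range (u.prod v))
  simp only [finrank_mat2, Module.finrank_prod, Module.finrank_self] at h1 h2
  omega

/-- Impossibility of a six-term algorithm in which two of the second factors vanish at the
identity matrix. -/
lemma no_six_normalized {f g : Fin 6 → Mat2 →ₗ[ℂ] ℂ} {C : Fin 6 → Mat2}
    (h : ∀ X Y, X * Y = ∑ k, (f k X * g k Y) • C k) {i j : Fin 6} (hij : i ≠ j)
    (hi : g i 1 = 0) (hj : g j 1 = 0) : False := by
  set S : Finset (Fin 6) := Finset.univ.filter fun k => k ≠ i ∧ k ≠ j with hS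
  have hScard : S.card = 4 := by
    rw [hS]; clear * - hij; revert i j; decide
  have hK : ∀ B, g i B = 0 → g j B = 0 → ∀ X, X * B = ∑ k ∈ S, (f k X * g k B) • C k := by
    intro B h1 h2 X
    rw [h, hS, Finset.sum_filter_of_ne]
    rintro k - hk
    constructor <;> rintro rfl <;> simp_all
  set E : S → Mat2 := fun k => g k 1 • C k with hE
  have hone : ∀ X, X = ∑ k : S, f k X • E k := by
    intro X
    have := hK 1 hi hj X
    rw [Matrix.mul_one, ← Finset.sum_coe_sort] at this
    simpa [hE, mul_smul] using this
  have hspan : ⊤ ≤ Submodule.span ℂ (Set.range E) := by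
    intro X _
    rw [hone X]
    exact Submodule.sum_mem _ fun k _ => Submodule.smul_mem _ _ (Submodule.subset_span ⟨k, rfl⟩)
  have hli : LinearIndependent ℂ E :=
    linearIndependent_of_top_le_span_of_card_eq_finrank hspan (by simp [hScard, finrank_mat2])
  have hg1 : ∀ k ∈ S, g k 1 ≠ 0 := by
    intro k hk h0
    apply hli.ne_zero ⟨k, hk⟩
    simp [hE, h0]
  -- Right multiplication by `B` in the common kernel is diagonal in the basis `E`.
  have hdiag : ∀ B, g i B = 0 → g j B = 0 → ∀ X, ∀ k ∈ S,
      f k (X * B) = (g k B / g k 1) * f k X := by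
    intro B h1 h2 X k hk
    have e1 := hone (X * B)
    have e2 : X * B = ∑ k : S, ((g k B / g k 1) * f k X) • E k := by
      rw [hK B h1 h2 X, ← Finset.sum_coe_sort]
      refine Finset.sum_congr rfl fun l _ => ?_
      have := hg1 l l.2
      rw [hE, smul_smul]
      congr 1
      field_simp
    have e3 : ∑ k : S, (f k (X * B) - (g k B / g k 1) * f k X) • E k = 0 := by
      simp only [sub_smul, Finset.sum_sub_distrib]
      rw [← e1, ← e2, sub_self]
    exact sub_eq_zero.mp (Fintype.linearIndependent_iff.mp hli _ e3 ⟨k, hk⟩)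
  -- The common kernel contains an idempotent other than `0` and `1`.
  obtain ⟨P, hPi, hPj, hPP, hP0, hP1⟩ :
      ∃ P : Mat2, g i P = 0 ∧ g j P = 0 ∧ P * P = P ∧ P ≠ 0 ∧ 1 - P ≠ 0 := by
    obtain ⟨B, hB, hB1⟩ : ∃ B ∈ LinearMap.ker ((g i).prod (g j)), B ∉ Submodule.span ℂ {(1 : Mat2)} := by
      by_contra! hc
      have h1 := Submodule.finrank_mono (show _ ≤ _ from hc)
      have h2 := two_le_finrank_ker (g i) (g j)
      rw [finrank_span_singleton one_ne_zero] at h1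
      omega
    obtain ⟨hBi, hBj⟩ : g i B = 0 ∧ g j B = 0 := by simpa using hB
    obtain ⟨a, ha⟩ := spectrum.nonempty_of_isAlgClosed_of_finiteDimensional ℂ B
    set N : Mat2 := B - a • 1 with hN
    have hNi : g i N = 0 := by simp [hN, hBi, hi]
    have hNj : g j N = 0 := by simp [hN, hBj, hj]
    have hN0 : N ≠ 0 := by
      intro h0
      exact hB1 (Submodule.mem_span_singleton.mpr ⟨a, (sub_eq_zero.mp h0).symm⟩)
    have hdet : N.det = 0 := by
      rw [spectrum.mem_iff, IsUnit.sub_iff, Matrix.isUnit_iff_isUnit_det, isUnit_iff_ne_zero,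
        not_not, Algebra.algebraMap_eq_smul_one] at ha
      exact ha
    have hNN : N * N = N.trace • N := by
      rw [Matrix.det_fin_two] at hdet
      ext p q
      fin_cases p <;> fin_cases q <;>
        simp [Matrix.mul_apply, Fin.sum_univ_two, Matrix.trace_fin_two] <;>
        first | ring1 | linear_combination -hdet
    have ht : N.trace ≠ 0 := by
      intro h0
      rw [h0, zero_smul] at hNN
      apply hN0
      rw [← Matrix.one_mul N, hone (1 * N)]
      refine Finset.sum_eq_zero fun k _ => ?_
      have h1 := hdiag N hNi hNj (1 * N) k k.2
      rw [Matrix.mul_assoc, hNN, Matrix.mul_zero, map_zero] at h1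
      have h2 := hdiag N hNi hNj 1 k k.2
      rcases mul_eq_zero.mp h1.symm with h3 | h3
      · rw [h2, h3]; simp
      · rw [h3]; simp
    refine ⟨N.trace⁻¹ • N, by simp [hNi], by simp [hNj], ?_, smul_ne_zero (inv_ne_zero ht) hN0, ?_⟩
    · rw [Matrix.smul_mul, Matrix.mul_smul, hNN, smul_smul N.trace⁻¹ N.trace, inv_mul_cancel₀ ht,
        one_smul]
    · intro h1
      have := congrArg Matrix.det (sub_eq_zero.mp h1)
      simp [hdet] at this
  set l : Fin 6 → ℂ := fun k => g k P / g k 1 with hl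
  set T₀ : Finset (Fin 6) := Finset.univ.filter fun k => k = i ∨ k = j ∨ l k ≠ 1 with hT₀
  set T₁ : Finset (Fin 6) := Finset.univ.filter fun k => k = i ∨ k = j ∨ l k = 1 with hT₁
  have hmem : ∀ k, k ≠ i → k ≠ j → k ∈ S := fun k h1 h2 => by simp [hS, h1, h2]
  have h₀ : ∀ X Y, X * (1 - P) * Y = ∑ k ∈ T₀, (f k (X * (1 - P)) * g k Y) • C k := by
    intro X Y
    rw [h, hT₀, Finset.sum_filter_of_ne]
    intro k _ hk
    by_contra! hc
    obtain ⟨h1, h2, h3⟩ := hc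
    apply hk
    have := hdiag P hPi hPj X k (hmem k h1 h2)
    change _ = l k * _ at this
    rw [Matrix.mul_sub, map_sub, Matrix.mul_one, this, h3]
    simp
  have h₁ : ∀ X Y, X * P * Y = ∑ k ∈ T₁, (f k (X * P) * g k Y) • C k := by
    intro X Y
    rw [h, hT₁, Finset.sum_filter_of_ne]
    intro k _ hk
    by_contra! hc
    obtain ⟨h1, h2, h3⟩ := hc
    apply hk
    have := hdiag P hPi hPj (X * P) k (hmem k h1 h2)
    change _ = l k * _ at this
    rw [Matrix.mul_assoc, hPP] at this
    have h4 : (1 - l k) * f k (X * P) = 0 := by linear_combination this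
    rw [(mul_eq_zero.mp h4).resolve_left (sub_ne_zero.mpr (Ne.symm h3))]
    simp
  have hc₀ := (four_le_card hP1 h₀).2
  have hc₁ := (four_le_card hP0 h₁).2
  have hsum : T₀.card + T₁.card = 8 := by
    rw [← Finset.card_union_add_card_inter]
    have hu : T₀ ∪ T₁ = Finset.univ := by
      ext k; simp only [hT₀, hT₁, Finset.mem_union, Finset.mem_filter, Finset.mem_univ]; tauto
    have hn : T₀ ∩ T₁ = {i, j} := by
      ext k
      simp only [hT₀, hT₁, Finset.mem_inter, Finset.mem_filter, Finset.mem_univ,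
        Finset.mem_insert, Finset.mem_singleton]
      tauto
    rw [hu, hn, Finset.card_pair hij]
    simp
  have a₀ := annihilate (R' := P) hP1 (by omega) (by rw [Matrix.sub_mul, hPP]; simp) h₀
    (k := i) (by simp [hT₀])
  have a₁ := annihilate (R' := 1 - P) hP0 (by omega) (by rw [Matrix.mul_sub, hPP]; simp) h₁
    (k := i) (by simp [hT₁])
  obtain ⟨Y, hY⟩ := a₀.2
  apply hY
  have e : Y = P * Y + (1 - P) * Y := by rw [← Matrix.add_mul]; simp
  rw [e, map_add, a₀.1, a₁.1, add_zero]

/-! ### Finding an invertible matrix in a common kernel -/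

/-- The polarization of the determinant on 2×2 matrices. -/
def polarDet : LinearMap.BilinForm ℂ Mat2 :=
  LinearMap.mk₂ ℂ (fun X Y => X 0 0 * Y 1 1 + X 1 1 * Y 0 0 - X 0 1 * Y 1 0 - X 1 0 * Y 0 1)
    (by intros; simp; ring) (by intros; simp; ring) (by intros; simp; ring)
    (by intros; simp; ring)

lemma polarDet_apply (X Y : Mat2) :
    polarDet X Y = X 0 0 * Y 1 1 + X 1 1 * Y 0 0 - X 0 1 * Y 1 0 - X 1 0 * Y 0 1 := rfl

lemma polarDet_symm : polarDet.IsSymm := ⟨fun X Y => by simp [polarDet_apply]; ring⟩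

lemma polarDet_nondegenerate : polarDet.Nondegenerate := by
  refine (LinearMap.IsRefl.nondegenerate_iff_separatingLeft polarDet_symm.isRefl).mpr ?_
  intro X hX
  have h1 := hX !![1, 0; 0, 0]
  have h2 := hX !![0, 1; 0, 0]
  have h3 := hX !![0, 0; 1, 0]
  have h4 := hX !![0, 0; 0, 1]
  simp [polarDet_apply] at h1 h2 h3 h4
  ext p q
  fin_cases p <;> fin_cases q <;> simp [h1, h2, h3, h4]

/-- If the common kernel of `polarDet G` and `polarDet G'` has no invertible element, it is a
totally isotropic plane, hence equal to its own orthogonal complement, which contains `G`. -/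
lemma mem_kernel_of_singular (G G' : Mat2)
    (h : ∀ B, polarDet G B = 0 → polarDet G' B = 0 → B.det = 0) :
    polarDet G G = 0 ∧ polarDet G' G = 0 := by
  set K := LinearMap.ker ((polarDet G).prod (polarDet G')) with hK
  have hmem : ∀ B, B ∈ K ↔ polarDet G B = 0 ∧ polarDet G' B = 0 := by
    intro B; simp [hK]
  have hKK : K ≤ polarDet.orthogonal K := by
    intro X hX Y hY
    have h1 := (hmem X).mp hX
    have h2 := (hmem Y).mp hY
    have h3 := (hmem _).mp (K.add_mem hX hY)
    have d1 := h X h1.1 h1.2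
    have d2 := h Y h2.1 h2.2
    have d3 := h _ h3.1 h3.2
    rw [Matrix.det_fin_two] at d1 d2 d3
    simp only [Matrix.add_apply] at d3
    change polarDet Y X = 0
    rw [polarDet_apply]
    linear_combination d3 - d1 - d2
  have hfin := LinearMap.BilinForm.finrank_orthogonal polarDet_nondegenerate K
  have h2 : 2 ≤ Module.finrank ℂ K := two_le_finrank_ker _ _
  rw [finrank_mat2] at hfin
  have heq := Submodule.eq_of_le_of_finrank_le hKK (by omega)
  rw [← hmem, heq]
  intro Y hY
  change polarDet Y G = 0
  rw [polarDet_symm.eq]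
  exact ((hmem Y).mp hY).1

lemma no_six_s19 {f g : Fin 6 → Mat2 →ₗ[ℂ] ℂ} {C : Fin 6 → Mat2}
    (h : ∀ X Y, X * Y = ∑ k, (f k X * g k Y) • C k) : False := by
  by_cases hex : ∃ i j : Fin 6, i ≠ j ∧ ∃ B : Mat2, g i B = 0 ∧ g j B = 0 ∧ B.det ≠ 0
  · obtain ⟨i, j, hij, B, hi, hj, hB⟩ := hex
    have hu : IsUnit B.det := isUnit_iff_ne_zero.mpr hB
    refine no_six_normalized (f := f) (g := fun k => (g k).comp (LinearMap.mulRight ℂ B))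
      (C := fun k => C k * B⁻¹) (fun X Y => ?_) hij (by simpa using hi) (by simpa using hj)
    have h1 := congrArg (· * B⁻¹) (h X (Y * B))
    simp only [← Matrix.mul_assoc X, Matrix.mul_nonsing_inv_cancel_right _ _ hu,
      Finset.sum_mul] at h1
    simpa using h1
  · push Not at hex
    let G : Fin 6 → Mat2 := fun k => (polarDet.toDual polarDet_nondegenerate).symm (g k)
    have hG : ∀ k X, polarDet (G k) X = g k X := by
      intro k X
      exact LinearMap.BilinForm.apply_toDual_symm_apply ..
    have hker : ∀ i j, g j (G i) = 0 := by
      intro i j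
      obtain ⟨j', hj', hjj⟩ : ∃ j', i ≠ j' ∧ (j = i ∨ j = j') := by
        by_cases hji : j = i
        · exact ⟨i + 1, by clear * -; revert i; decide, Or.inl hji⟩
        · exact ⟨j, Ne.symm hji, Or.inr rfl⟩
      have := mem_kernel_of_singular (G i) (G j') (by
        intro B h1 h2
        rw [hG] at h1 h2
        exact hex i j' hj' B h1 h2)
      rw [hG, hG] at this
      rcases hjj with rfl | rfl
      exacts [this.1, this.2]
    have hG0 : ∀ i, G i = 0 := by
      intro i
      rw [← Matrix.one_mul (G i), h]
      simp [hker]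
    have hg0 : ∀ i X, g i X = 0 := by
      intro i X
      rw [← hG, hG0]; simp
    have := h 1 1
    simp [hg0] at this

/-! ### The Schmidt rank -/

lemma decomp_succ {U : Matrix (Fin 2 × Fin 2 × Fin 2) (Fin 2 × Fin 2 × Fin 2) ℂ} {r : ℕ}
    (h : ∃ A B C : Fin r → Mat2, U = ∑ j, A j ⊗ₖ (B j ⊗ₖ C j)) :
    ∃ A B C : Fin (r + 1) → Mat2, U = ∑ j, A j ⊗ₖ (B j ⊗ₖ C j) := by
  obtain ⟨A, B, C, rfl⟩ := h
  exact ⟨Fin.cons 0 A, Fin.cons 0 B, Fin.cons 0 C, by simp [Fin.sum_univ_succ]⟩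

theorem stmt19 : M₃ ∈ Matrix.unitaryGroup (Fin 2 × Fin 2 × Fin 2) ℂ ∧ sr M₃ = 7 := by
  refine ⟨M3_unitary, le_antisymm (Nat.sInf_le M3_seven) ?_⟩
  refine le_csInf ⟨7, M3_seven⟩ fun r hr => ?_
  by_contra! hlt
  have h6 : ∃ A B C : Fin 6 → Mat2, M₃ = ∑ j, A j ⊗ₖ (B j ⊗ₖ C j) :=
    Nat.le_induction (P := fun n _ => ∃ A B C : Fin n → Mat2, M₃ = ∑ j, A j ⊗ₖ (B j ⊗ₖ C j))
      hr (fun _ _ => decomp_succ) 6 (by omega)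
  obtain ⟨A, B, C, h⟩ := h6
  obtain ⟨f, g, D, hD⟩ := bilinear_of_decomp A B C h
  exact no_six_s19 hD
end
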